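/- The empirical measure process (L_n)_{n≥1} of the δ-ORRW on G satisfies the large deviation principle on 𝒫(V) with good rate function I_δ: I_δ is lower semicontinuous with compact level sets and finite at some point, for every closed set C⊆𝒫(V) one has limsup_n (1/n)·log P_{v₁}(L_n∈C) ≤ −inf_{ν∈C} I_δ(ν), and for every open set O⊆𝒫(V) one has liminf_n (1/n)·log P_{v₁}(L_n∈O) ≥ −inf_{ν∈O} I_δ(ν). -/

import Mathlib

open scoped BigOperators Classical ENNReal
open Filter Topology

noncomputable section
namespace ORRW

/-- Probability measures on a finite type `A`, topologized as a subset of `ℝ^A`. -/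
abbrev ProbMeas (A : Type) [Fintype A] : Type :=
  {p : A → ℝ // (∀ a, 0 ≤ p a) ∧ ∑ a, p a = 1}

/-- Relative entropy `R(γ‖ρ)` between two finitely supported "rows", valued in `EReal`,
with `+∞` when absolute continuity fails. -/
def relEnt {A : Type} [Fintype A] (γ ρ : A → ℝ) : EReal :=
  if ∀ a, ρ a = 0 → γ a = 0 then ((∑ a, γ a * Real.log (γ a / ρ a) : ℝ) : EReal)
  else (⊤ : EReal)

/-- `∫ R(q‖p) dν = Σ_a ν(a) · R(q(a,·)‖p(a,·))`. -/
def relEntInt {A : Type} [Fintype A] (ν : A → ℝ) (q p : A → A → ℝ) : EReal :=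
  ∑ a, (ν a : EReal) * relEnt (q a) (p a)

/-- `ν` is an invariant measure of the kernel `q`. -/
def Invariant {A : Type} [Fintype A] (ν : A → ℝ) (q : A → A → ℝ) : Prop :=
  ∀ y, ∑ x, ν x * q x y = ν y

/-- Extended-real logarithm: `⊥` at nonpositive arguments. -/
def elog (x : ℝ) : EReal := if x ≤ 0 then (⊥ : EReal) else ((Real.log x : ℝ) : EReal)

/-- Empirical measure of a finite trajectory `f : Fin (n+1) → A`. -/
def empMeas {A : Type} [Fintype A] [DecidableEq A] (n : ℕ) (f : Fin (n + 1) → A) :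
    ProbMeas A :=
  ⟨fun a => ((Finset.univ.filter (fun i => f i = a)).card : ℝ) / (n + 1),
    fun a => by positivity, by
      have key : ∑ a : A, ((Finset.univ.filter (fun i => f i = a)).card) = n + 1 := by
        have h := Finset.card_eq_sum_card_fiberwise
          (s := (Finset.univ : Finset (Fin (n + 1)))) (t := (Finset.univ : Finset A))
          (f := f) (fun i _ => Finset.mem_univ (f i))
        simpa using h.symm
      have key' : ∑ a : A, (((Finset.univ.filter (fun i => f i = a)).card : ℝ)) = (n : ℝ) + 1 := by
        have h2 := congrArg (fun m : ℕ => (m : ℝ)) key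
        push_cast at h2
        simpa using h2
      rw [← Finset.sum_div, key', div_self (by positivity)]⟩

section Graph

variable {V : Type} [Fintype V] [DecidableEq V]

/-- Weight of an edge given the set `F` of already traversed edges. -/
def gw (δ : ℝ) (F : Finset (Sym2 V)) (e : Sym2 V) : ℝ := if e ∈ F then δ else 1

/-- The transition kernel `p̂_F` on `V`. -/
def phat (G : SimpleGraph V) [DecidableRel G.Adj] (δ : ℝ) (F : Finset (Sym2 V))
    (x y : V) : ℝ :=
  if G.Adj x y then gw δ F s(x, y) / ∑ z ∈ G.neighborFinset x, gw δ F s(x, z) else 0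

/-- Two edges are adjacent iff they share a vertex. -/
def edgeAdj (e e' : Sym2 V) : Prop := ∃ v, v ∈ e ∧ v ∈ e'

/-- `x` is a vertex of the edge set `F`. -/
def memVerts (F : Finset (Sym2 V)) (x : V) : Prop := ∃ e ∈ F, x ∈ e

/-- `𝒯_G`: stochastic matrices on `V` adapted to `G`. -/
def TG (G : SimpleGraph V) : Set (V → V → ℝ) :=
  {q | (∀ x y, 0 ≤ q x y) ∧ (∀ x, ∑ y, q x y = 1) ∧ ∀ x y, q x y ≠ 0 → G.Adj x y}

/-- `𝒯(F)`: stochastic kernels from the vertex set of `F` to `V`, supported on `F`. -/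
def TE (F : Finset (Sym2 V)) : Set (V → V → ℝ) :=
  {q | (∀ x y, 0 ≤ q x y) ∧ (∀ x, memVerts F x → ∑ y, q x y = 1) ∧
    ∀ x y, q x y ≠ 0 → s(x, y) ∈ F}

/-- `ℰ`: admissible increasing sequences of traversed edge sets. -/
def seqE (G : SimpleGraph V) [DecidableRel G.Adj] (v₁ : V) :
    Set (Fin G.edgeFinset.card → Finset (Sym2 V)) :=
  {Es | (∀ k, Es k ⊆ G.edgeFinset) ∧ (∀ k, (Es k).card = (k : ℕ) + 1) ∧
    (∀ k l : Fin G.edgeFinset.card, (k : ℕ) + 1 = (l : ℕ) → Es k ⊂ Es l) ∧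
    (∀ k : Fin G.edgeFinset.card, (k : ℕ) = 0 → ∃ e ∈ Es k, v₁ ∈ e) ∧
    (∀ k l : Fin G.edgeFinset.card, (k : ℕ) + 1 = (l : ℕ) →
      ∀ e ∈ Es l \ Es k, ∃ e' ∈ Es k, edgeAdj e e')}

/-- The rate function `I_δ`. -/
def Ifun (G : SimpleGraph V) [DecidableRel G.Adj] (v₁ : V) (δ : ℝ) (ν : ProbMeas V) : EReal :=
  sInf { c : EReal |
    ∃ (νs : Fin G.edgeFinset.card → ProbMeas V) (r : Fin G.edgeFinset.card → ℝ)
      (Es : Fin G.edgeFinset.card → Finset (Sym2 V))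
      (qs : Fin G.edgeFinset.card → V → V → ℝ),
      Es ∈ seqE G v₁ ∧ (∀ k, 0 ≤ r k) ∧ (∑ k, r k = 1) ∧
      (∀ k x, (νs k).1 x ≠ 0 → memVerts (Es k) x) ∧
      (∀ x, ∑ k, r k * (νs k).1 x = ν.1 x) ∧
      (∀ k, qs k ∈ TE (Es k)) ∧ (∀ k, Invariant (νs k).1 (qs k)) ∧
      c = ∑ k, ((r k : ℝ) : EReal) * relEntInt (νs k).1 (qs k) (phat G δ (Es k)) }

/-- Edges traversed along a path, given as a list of consecutively visited vertices. -/
def pathEdges : List V → Finset (Sym2 V)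
  | [] => ∅
  | [_] => ∅
  | x :: y :: t => insert s(x, y) (pathEdges (y :: t))

/-- Product of one-step ORRW transition probabilities along a trajectory,
the trajectory being listed in reverse chronological order. -/
def stepsProb (G : SimpleGraph V) [DecidableRel G.Adj] (δ : ℝ) : List V → ℝ
  | [] => 1
  | [_] => 1
  | y :: x :: t => phat G δ (pathEdges (x :: t).reverse) x y * stepsProb G δ (x :: t)

/-- The law of `(X_0, …, X_n)` for the `δ`-ORRW started at `v₁`. -/
def trajProb (G : SimpleGraph V) [DecidableRel G.Adj] (δ : ℝ) (v₁ : V) (n : ℕ)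
    (f : Fin (n + 1) → V) : ℝ :=
  if f 0 = v₁ then stepsProb G δ (List.ofFn f).reverse else 0

/-- `P_{v₁}(L_{n+1} ∈ C)`: the probability that the empirical measure of the first
`n+1` positions of the `δ`-ORRW lies in `C`. -/
def probEmp (G : SimpleGraph V) [DecidableRel G.Adj] (δ : ℝ) (v₁ : V) (n : ℕ)
    (C : Set (ProbMeas V)) : ℝ :=
  ∑ f : Fin (n + 1) → V, if empMeas n f ∈ C then trajProb G δ v₁ n f else 0

/-- The family `𝒮` of edge sets of connected subgraphs having an edge at `v₁`. -/
def scrS (G : SimpleGraph V) [DecidableRel G.Adj] (v₁ : V) : Set (Finset (Sym2 V)) :=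
  {F | F ⊆ G.edgeFinset ∧ (∃ e ∈ F, v₁ ∈ e) ∧
    ∀ x y : V, memVerts F x → memVerts F y →
      (SimpleGraph.fromEdgeSet (↑F : Set (Sym2 V))).Reachable x y}

/-- `𝒮₀` is a decreasing subset of `𝒮`. -/
def DecreasingIn (G : SimpleGraph V) [DecidableRel G.Adj] (v₁ : V)
    (S0 : Set (Finset (Sym2 V))) : Prop :=
  ∀ F₁ F₂, F₁ ∈ scrS G v₁ → F₂ ∈ scrS G v₁ → F₁ ⊆ F₂ → F₂ ∈ S0 → F₁ ∈ S0

/-- `P_{v₁}(T_{𝒮₀} > n)`. -/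
def probTgt (G : SimpleGraph V) [DecidableRel G.Adj] (δ : ℝ) (v₁ : V)
    (S0 : Set (Finset (Sym2 V))) (n : ℕ) : ℝ :=
  ∑ f : Fin (n + 1) → V,
    if ∀ k, 1 ≤ k → k ≤ n → pathEdges ((List.ofFn f).take (k + 1)) ∈ S0 then
      trajProb G δ v₁ n f
    else 0

/-- `P_{v₁}(C_E > n)` for the edge cover time `C_E`. -/
def probCgt (G : SimpleGraph V) [DecidableRel G.Adj] (δ : ℝ) (v₁ : V) (n : ℕ) : ℝ :=
  ∑ f : Fin (n + 1) → V,
    if ¬ G.edgeFinset ⊆ pathEdges (List.ofFn f) then trajProb G δ v₁ n f else 0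

/-- `E_{v₁}[exp (α T_{𝒮₀})]`, valued in `ℝ≥0∞`; the stopping time takes values in
`{1, 2, …} ∪ {∞}`. -/
def expT (G : SimpleGraph V) [DecidableRel G.Adj] (δ : ℝ) (v₁ : V)
    (S0 : Set (Finset (Sym2 V))) (α : ℝ) : ℝ≥0∞ :=
  (∑' n : ℕ, ENNReal.ofReal
      (Real.exp (α * (n + 1)) * (probTgt G δ v₁ S0 n - probTgt G δ v₁ S0 (n + 1)))) +
    (if 0 < α then (⊤ : ℝ≥0∞) else if α = 0 then 1 else 0) *
      ENNReal.ofReal (⨅ n : ℕ, probTgt G δ v₁ S0 n)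

/-- `E_{v₁}[exp (α C_E)]`, valued in `ℝ≥0∞`. -/
def expC (G : SimpleGraph V) [DecidableRel G.Adj] (δ : ℝ) (v₁ : V) (α : ℝ) : ℝ≥0∞ :=
  (∑' n : ℕ, ENNReal.ofReal
      (Real.exp (α * (n + 1)) * (probCgt G δ v₁ n - probCgt G δ v₁ (n + 1)))) +
    (if 0 < α then (⊤ : ℝ≥0∞) else if α = 0 then 1 else 0) *
      ENNReal.ofReal (⨅ n : ℕ, probCgt G δ v₁ n)

/-- The critical exponent `α_c(δ)` attached to a family `𝒮₀` of edge sets. -/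
def alphaC (G : SimpleGraph V) [DecidableRel G.Adj] (δ : ℝ)
    (S0 : Set (Finset (Sym2 V))) : EReal :=
  sInf { c : EReal | ∃ (ν : ProbMeas V) (F : Finset (Sym2 V)) (q : V → V → ℝ),
    F ∈ S0 ∧ q ∈ TE F ∧ (∀ x, ν.1 x ≠ 0 → memVerts F x) ∧ Invariant ν.1 q ∧
    c = relEntInt ν.1 q (phat G δ F) }

/-- `α_c^1(δ)`: the critical exponent for the cover time. -/
def alphaC1 (G : SimpleGraph V) [DecidableRel G.Adj] (v₁ : V) (δ : ℝ) : EReal :=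
  alphaC G δ (scrS G v₁ \ {G.edgeFinset})

end Graph

section Lifted

variable {V : Type} [Fintype V] [LinearOrder V]

/-- Smaller endpoint of an unordered pair. -/
def sym2lo (e : Sym2 V) : V := Sym2.lift ⟨fun a b => min a b, fun a b => min_comm a b⟩ e

/-- Larger endpoint of an unordered pair. -/
def sym2hi (e : Sym2 V) : V := Sym2.lift ⟨fun a b => max a b, fun a b => max_comm a b⟩ e

/-- `V_S = E × {-1, 1}`: vertex set of the lifted directed graph `S`
(`true` plays the role of `+1`). -/
abbrev VSet (G : SimpleGraph V) [DecidableRel G.Adj] : Type :=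
  {e : Sym2 V // e ∈ G.edgeFinset} × Bool

/-- Tail `z⁻` of an oriented edge. -/
def zm (G : SimpleGraph V) [DecidableRel G.Adj] (z : VSet G) : V :=
  if z.2 then sym2lo z.1.1 else sym2hi z.1.1

/-- Head `z⁺` of an oriented edge. -/
def zp (G : SimpleGraph V) [DecidableRel G.Adj] (z : VSet G) : V :=
  if z.2 then sym2hi z.1.1 else sym2lo z.1.1

/-- The kernel `p_F` on the lifted directed graph `S`. -/
def pS (G : SimpleGraph V) [DecidableRel G.Adj] (δ : ℝ) (F : Finset (Sym2 V))
    (z₁ z₂ : VSet G) : ℝ :=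
  if zp G z₁ = zm G z₂ then
    gw δ F z₂.1.1 / ∑ w : VSet G, (if zp G z₁ = zm G w then gw δ F w.1.1 else 0)
  else 0

/-- `𝒯_S`: stochastic matrices on `V_S` moving along orientations. -/
def TS (G : SimpleGraph V) [DecidableRel G.Adj] : Set (VSet G → VSet G → ℝ) :=
  {q | (∀ z w, 0 ≤ q z w) ∧ (∀ z, ∑ w, q z w = 1) ∧ ∀ z w, q z w ≠ 0 → zp G z = zm G w}

/-- `𝒞(𝒮₀)`: probability measures on `V_S` whose first marginal is supported in
some member of `𝒮₀`. -/
def CC (G : SimpleGraph V) [DecidableRel G.Adj] (S0 : Set (Finset (Sym2 V))) :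
    Set (ProbMeas (VSet G)) :=
  {μ | ∃ F ∈ S0, ∀ z : VSet G, μ.1 z ≠ 0 → z.1.1 ∈ F}

/-- `Λ_{δ,𝒮₀}`. -/
def Lam (G : SimpleGraph V) [DecidableRel G.Adj] (v₁ : V) (δ : ℝ)
    (S0 : Set (Finset (Sym2 V))) (μ : ProbMeas (VSet G)) : EReal :=
  sInf { c : EReal |
    ∃ (μs : Fin G.edgeFinset.card → ProbMeas (VSet G)) (r : Fin G.edgeFinset.card → ℝ)
      (Es : Fin G.edgeFinset.card → Finset (Sym2 V))
      (qs : Fin G.edgeFinset.card → VSet G → VSet G → ℝ),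
      Es ∈ seqE G v₁ ∧ (∀ k, 0 ≤ r k) ∧ (∀ k, Es k ∉ S0 → r k = 0) ∧ (∑ k, r k = 1) ∧
      (∀ k z, (μs k).1 z ≠ 0 → z.1.1 ∈ Es k) ∧
      (∀ z, ∑ k, r k * (μs k).1 z = μ.1 z) ∧
      (∀ k, qs k ∈ TS G) ∧ (∀ k, Invariant (μs k).1 (qs k)) ∧
      c = ∑ k, ((r k : ℝ) : EReal) * relEntInt (μs k).1 (qs k) (pS G δ (Es k)) }

/-- `Λ^z_{δ,𝒮₀}`. -/
def LamZ (G : SimpleGraph V) [DecidableRel G.Adj] (v₁ : V) (δ : ℝ)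
    (S0 : Set (Finset (Sym2 V))) (z : VSet G) (μ : ProbMeas (VSet G)) : EReal :=
  sInf { c : EReal |
    ∃ (μs : Fin G.edgeFinset.card → ProbMeas (VSet G)) (r : Fin G.edgeFinset.card → ℝ)
      (Es : Fin G.edgeFinset.card → Finset (Sym2 V))
      (qs : Fin G.edgeFinset.card → VSet G → VSet G → ℝ),
      Es ∈ seqE G v₁ ∧ (∀ k : Fin G.edgeFinset.card, (k : ℕ) = 0 → Es k = {z.1.1}) ∧
      (∀ k, 0 ≤ r k) ∧ (∀ k, Es k ∉ S0 → r k = 0) ∧ (∑ k, r k = 1) ∧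
      (∀ k w, (μs k).1 w ≠ 0 → w.1.1 ∈ Es k) ∧
      (∀ w, ∑ k, r k * (μs k).1 w = μ.1 w) ∧
      (∀ k, qs k ∈ TS G) ∧ (∀ k, Invariant (μs k).1 (qs k)) ∧
      c = ∑ k, ((r k : ℝ) : EReal) * relEntInt (μs k).1 (qs k) (pS G δ (Es k)) }

/-- `Λ₁`: the Donsker–Varadhan functional for the simple random walk on `S`
(whose kernel is `pS` with `δ = 1`). -/
def Lam1 (G : SimpleGraph V) [DecidableRel G.Adj] (μ : ProbMeas (VSet G)) : EReal :=
  sInf { c : EReal | ∃ q ∈ TS G, Invariant μ.1 q ∧ c = relEntInt μ.1 q (pS G 1 ∅) }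

/-- Boundary `∂F` of an edge set: edges of `F` adjacent to some edge outside `F`. -/
def bdry (G : SimpleGraph V) [DecidableRel G.Adj] (F : Finset (Sym2 V)) : Finset (Sym2 V) :=
  F.filter fun e => ∃ e' ∈ G.edgeFinset \ F, edgeAdj e e'

/-- Out-degree `d(z)` of `z` in `S`. -/
def outDeg (G : SimpleGraph V) [DecidableRel G.Adj] (z : VSet G) : ℕ :=
  (Finset.univ.filter (fun w : VSet G => zp G z = zm G w)).card

/-- Number `k(z)` of out-neighbours of `z` lying in `F × {-1, 1}`. -/
def outDegIn (G : SimpleGraph V) [DecidableRel G.Adj] (F : Finset (Sym2 V))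
    (z : VSet G) : ℕ :=
  (Finset.univ.filter (fun w : VSet G => zp G z = zm G w ∧ w.1.1 ∈ F)).card

/-- The law of `(Z_0, …, Z_n)` for the lifted `δ`-ORRW conditioned on `Z_0 = z`. -/
def liftTraj (G : SimpleGraph V) [DecidableRel G.Adj] (δ : ℝ) (z : VSet G) (n : ℕ)
    (g : Fin (n + 1) → VSet G) : ℝ :=
  if g 0 = z then
    ∏ i : Fin n,
      pS G δ ((Finset.Iic i.castSucc).image (fun j => (g j).1.1))
        (g i.castSucc) (g i.succ)
  else 0

/-- The restricted logarithmic Laplace functional `W^{n+1}_{𝒮₀}(z)`. -/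
def Wres (G : SimpleGraph V) [DecidableRel G.Adj] (δ : ℝ) (z : VSet G)
    (S0 : Set (Finset (Sym2 V))) (h : ProbMeas (VSet G) → ℝ) (n : ℕ) : EReal :=
  if 0 < ∑ g : Fin (n + 1) → VSet G,
      (if empMeas n g ∈ CC G S0 then liftTraj G δ z n g else 0) then
    ((-((((n : ℝ) + 1))⁻¹ * Real.log (∑ g : Fin (n + 1) → VSet G,
      if empMeas n g ∈ CC G S0 then
        Real.exp (-((n : ℝ) + 1) * h (empMeas n g)) * liftTraj G δ z n g
      else 0)) : ℝ) : EReal)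
  else (⊤ : EReal)

end Lifted

set_option linter.all false

section Paths

variable {V : Type} [Fintype V] [DecidableEq V]

def stp (q : Finset (Sym2 V) → V → V → ℝ) : List V → V → ℝ
  | [], _ => 1
  | x :: t, y => q (pathEdges (x :: t)) x y

def Wt (q : Finset (Sym2 V) → V → V → ℝ) : List V → ℝ
  | [] => 1
  | y :: l => stp q l y * Wt q l

def Ex (q : Finset (Sym2 V) → V → V → ℝ) : ℕ → (List V → ℝ) → List V → ℝ
  | 0, φ, l => φ l
  | m + 1, φ, l => ∑ y, stp q l y * Ex q m φ (y :: l)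

theorem pathEdges_snoc (l : List V) (x y : V) :
    pathEdges (l ++ [x, y]) = insert s(x, y) (pathEdges (l ++ [x])) := by
  induction l with
  | nil => rfl
  | cons a l ih =>
    cases l with
    | nil => simpa [pathEdges] using Finset.pair_comm _ _
    | cons c l =>
      simp only [List.cons_append, pathEdges] at ih ⊢
      rw [ih, Finset.insert_comm]

theorem pathEdges_reverse (l : List V) : pathEdges l.reverse = pathEdges l := by
  induction l with
  | nil => rfl
  | cons y l ih =>
    cases l with
    | nil => rfl
    | cons x t =>
      have h : (y :: x :: t).reverse = t.reverse ++ [x, y] := by simp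
      rw [h, pathEdges_snoc]
      have h2 : (x :: t).reverse = t.reverse ++ [x] := by simp
      rw [← h2, ih, Sym2.eq_swap]
      rfl

theorem stepsProb_eq (G : SimpleGraph V) [DecidableRel G.Adj] (δ : ℝ) (l : List V) :
    stepsProb G δ l = Wt (phat G δ) l := by
  induction l with
  | nil => rfl
  | cons y l ih =>
    cases l with
    | nil => simp [stepsProb, Wt, stp]
    | cons x t =>
      simp only [stepsProb, Wt, stp, pathEdges_reverse] at ih ⊢
      rw [ih]

theorem Ex_mul_Wt (q : Finset (Sym2 V) → V → V → ℝ) (φ : List V → ℝ) (n : ℕ) (l : List V) :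
    Ex q n φ l * Wt q l =
      ∑ u : Fin n → V, φ ((List.ofFn u).reverse ++ l) * Wt q ((List.ofFn u).reverse ++ l) := by
  induction n generalizing l with
  | zero => simp [Ex]
  | succ n ih =>
    rw [← Equiv.sum_comp (Fin.consEquiv (fun _ : Fin (n + 1) => V)), Fintype.sum_prod_type]
    simp only [Ex, Finset.sum_mul]
    refine Finset.sum_congr rfl fun y _ => ?_
    have := ih (y :: l)
    simp only [Wt] at this
    rw [mul_right_comm, mul_comm, this]
    refine Finset.sum_congr rfl fun u _ => ?_
    simp [Fin.consEquiv, List.ofFn_succ]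

theorem count_ofFn' {n : ℕ} (f : Fin n → V) (a : V) :
    (List.ofFn f).count a = (Finset.univ.filter (fun i => f i = a)).card := by
  induction n with
  | zero => simp
  | succ n ih =>
    rw [List.ofFn_succ, List.count_cons, ih, Fin.univ_succ, Finset.filter_cons]
    split_ifs with h1 h2 h2
    · simp [Finset.filter_map]
    · simp_all
    · simp_all
    · simp [Finset.filter_map]

theorem probEmp_eq (G : SimpleGraph V) [DecidableRel G.Adj] (δ : ℝ) (v₁ : V) (n : ℕ)
    (C : Set (ProbMeas V)) :
    probEmp G δ v₁ n C = Ex (phat G δ) n (fun l =>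
      if ∃ ν ∈ C, ∀ a, ν.1 a = (l.count a : ℝ) / (n + 1) then 1 else 0) [v₁] := by
  have h := Ex_mul_Wt (phat G δ) (fun l =>
      if ∃ ν ∈ C, ∀ a, ν.1 a = (l.count a : ℝ) / (n + 1) then 1 else 0) n [v₁]
  rw [show Wt (phat G δ) [v₁] = 1 by simp [Wt, stp], mul_one] at h
  rw [h, probEmp, ← Equiv.sum_comp (Fin.consEquiv (fun _ : Fin (n + 1) => V)),
    Fintype.sum_prod_type, Finset.sum_eq_single v₁]
  · refine Finset.sum_congr rfl fun u _ => ?_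
    have hl : (List.ofFn (Fin.consEquiv (fun _ : Fin (n + 1) => V) (v₁, u))).reverse
        = (List.ofFn u).reverse ++ [v₁] := by
      simp [Fin.consEquiv, List.ofFn_succ]
    have hiff : (∃ ν ∈ C, ∀ a, ν.1 a =
        (((List.ofFn u).reverse ++ [v₁]).count a : ℝ) / (n + 1)) ↔
        empMeas n (Fin.consEquiv (fun _ : Fin (n + 1) => V) (v₁, u)) ∈ C := by
      have he : ∀ a, (empMeas n (Fin.consEquiv (fun _ : Fin (n + 1) => V) (v₁, u))).1 a =
          (((List.ofFn u).reverse ++ [v₁]).count a : ℝ) / (n + 1) := by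
        intro a
        rw [← hl, List.count_reverse, count_ofFn']
        rfl
      constructor
      · rintro ⟨ν, hν, h⟩
        have : empMeas n (Fin.consEquiv (fun _ : Fin (n + 1) => V) (v₁, u)) = ν := by
          apply Subtype.ext; funext a; rw [he, h]
        rwa [this]
      · intro h; exact ⟨_, h, he⟩
    rw [trajProb, stepsProb_eq, hl]
    simp only [hiff]
    split_ifs <;> simp_all [Fin.consEquiv]
  · intro y _ hy
    refine Finset.sum_eq_zero fun u _ => ?_
    simp [trajProb, Fin.consEquiv, hy]
  · simp

theorem Ex_mono (q : Finset (Sym2 V) → V → V → ℝ) (hq : ∀ F x y, 0 ≤ q F x y)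
    {φ ψ : List V → ℝ} (n : ℕ) (l : List V)
    (h : ∀ u : List V, u.length = n → φ (u ++ l) ≤ ψ (u ++ l)) :
    Ex q n φ l ≤ Ex q n ψ l := by
  induction n generalizing l with
  | zero => simpa [Ex] using h [] rfl
  | succ n ih =>
    refine Finset.sum_le_sum fun y _ => ?_
    refine mul_le_mul_of_nonneg_left (ih _ fun u hu => ?_) ?_
    · simpa using h (u ++ [y]) (by simp [hu])
    · cases l <;> simp [stp, hq]

theorem Ex_nonneg (q : Finset (Sym2 V) → V → V → ℝ) (hq : ∀ F x y, 0 ≤ q F x y)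
    {φ : List V → ℝ} (n : ℕ) (l : List V) (h : ∀ l, 0 ≤ φ l) : 0 ≤ Ex q n φ l := by
  induction n generalizing l with
  | zero => exact h l
  | succ n ih =>
    refine Finset.sum_nonneg fun y _ => mul_nonneg ?_ (ih _)
    cases l <;> simp [stp, hq]

theorem Ex_add (q : Finset (Sym2 V) → V → V → ℝ) (φ ψ : List V → ℝ) (n : ℕ) (l : List V) :
    Ex q n (fun l => φ l + ψ l) l = Ex q n φ l + Ex q n ψ l := by
  induction n generalizing l with
  | zero => rfl
  | succ n ih => simp only [Ex, ih, mul_add, Finset.sum_add_distrib]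

theorem Ex_smul (q : Finset (Sym2 V) → V → V → ℝ) (c : ℝ) (φ : List V → ℝ) (n : ℕ) (l : List V) :
    Ex q n (fun l => c * φ l) l = c * Ex q n φ l := by
  induction n generalizing l with
  | zero => rfl
  | succ n ih =>
    simp only [Ex, ih, Finset.mul_sum]
    exact Finset.sum_congr rfl fun _ _ => by ring

theorem Ex_sum (q : Finset (Sym2 V) → V → V → ℝ) {ι : Type} (s : Finset ι)
    (φ : ι → List V → ℝ) (n : ℕ) (l : List V) :
    Ex q n (fun l => ∑ i ∈ s, φ i l) l = ∑ i ∈ s, Ex q n (φ i) l := by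
  induction n generalizing l with
  | zero => rfl
  | succ n ih =>
    simp only [Ex, ih, Finset.mul_sum]
    exact Finset.sum_comm

theorem Ex_comp (q : Finset (Sym2 V) → V → V → ℝ) (φ : List V → ℝ) (m n : ℕ) (l : List V) :
    Ex q (m + n) φ l = Ex q m (fun l' => Ex q n φ l') l := by
  induction m generalizing l with
  | zero => simp [Ex]
  | succ m ih =>
    rw [show m + 1 + n = (m + n) + 1 by ring]
    simp only [Ex, ih]

theorem Ex_one_le (q : Finset (Sym2 V) → V → V → ℝ) (hq : ∀ F x y, 0 ≤ q F x y)
    (hs : ∀ F x, ∑ y, q F x y ≤ 1) (n : ℕ) (x : V) (t : List V) :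
    Ex q n (fun _ => 1) (x :: t) ≤ 1 := by
  induction n generalizing x t with
  | zero => simp [Ex]
  | succ n ih =>
    calc Ex q (n + 1) (fun _ => 1) (x :: t)
        ≤ ∑ y, q (pathEdges (x :: t)) x y * 1 := by
          refine Finset.sum_le_sum fun y _ => ?_
          exact mul_le_mul_of_nonneg_left (ih _ _) (hq _ _ _)
      _ ≤ 1 := by simpa using hs _ _

end Paths

section Types

variable {V : Type} [Fintype V] [DecidableEq V]

theorem gw_pos {δ : ℝ} (hδ : 0 < δ) (F : Finset (Sym2 V)) (e : Sym2 V) : 0 < gw δ F e := by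
  unfold gw; split_ifs <;> simp [hδ]

theorem phat_pos (G : SimpleGraph V) [DecidableRel G.Adj] {δ : ℝ} (hδ : 0 < δ)
    (F : Finset (Sym2 V)) {x y : V} (h : G.Adj x y) : 0 < phat G δ F x y := by
  unfold phat
  rw [if_pos h]
  refine div_pos (gw_pos hδ _ _) (Finset.sum_pos (fun z _ => gw_pos hδ _ _) ⟨y, by simpa using h⟩)

theorem phat_nonneg (G : SimpleGraph V) [DecidableRel G.Adj] {δ : ℝ} (hδ : 0 < δ)
    (F : Finset (Sym2 V)) (x y : V) : 0 ≤ phat G δ F x y := by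
  by_cases h : G.Adj x y
  · exact (phat_pos G hδ F h).le
  · simp [phat, h]

theorem phat_adj (G : SimpleGraph V) [DecidableRel G.Adj] {δ : ℝ}
    (F : Finset (Sym2 V)) {x y : V} (h : phat G δ F x y ≠ 0) : G.Adj x y := by
  by_contra h'
  simp [phat, h'] at h

/-- Lists (newest vertex first) that are trajectories started at `v₁`. -/
def Good (G : SimpleGraph V) (v₁ : V) : List V → Prop
  | [] => False
  | [x] => x = v₁
  | y :: x :: t => G.Adj x y ∧ Good G v₁ (x :: t)

theorem good_of_Wt (G : SimpleGraph V) [DecidableRel G.Adj] (δ : ℝ) (v₁ : V) (u : List V)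
    (h : Wt (phat G δ) (u ++ [v₁]) ≠ 0) : Good G v₁ (u ++ [v₁]) := by
  induction u with
  | nil => simp [Good]
  | cons y u ih =>
    simp only [List.cons_append, Wt] at h
    have h1 := ih (right_ne_zero_of_mul h)
    have h2 := left_ne_zero_of_mul h
    rw [List.cons_append]
    generalize hl : u ++ [v₁] = l at *
    cases l with
    | nil => simp [Good] at h1
    | cons x t => exact ⟨phat_adj G _ h2, h1⟩

def cnt : List V → (Finset (Sym2 V) × V × V) → ℕ
  | [] => 0
  | [_] => 0
  | y :: x :: t => fun i => cnt (x :: t) i + if i = (pathEdges (x :: t), x, y) then 1 else 0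

theorem Wt_eq_prod (q : Finset (Sym2 V) → V → V → ℝ) (l : List V) :
    Wt q l = ∏ i : Finset (Sym2 V) × V × V, q i.1 i.2.1 i.2.2 ^ cnt l i := by
  induction l with
  | nil => simp [Wt, cnt]
  | cons y l ih =>
    cases l with
    | nil => simp [Wt, cnt, stp]
    | cons x t =>
      rw [Wt, ih]
      simp only [cnt, pow_add, Finset.prod_mul_distrib, stp]
      rw [mul_comm]
      congr 1
      simp [pow_ite]

theorem cnt_sum (l : List V) : (∑ i, cnt l i) = l.length - 1 := by
  induction l with
  | nil => simp [cnt]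
  | cons y l ih =>
    cases l with
    | nil => simp [cnt]
    | cons x t =>
      simp only [cnt, Finset.sum_add_distrib, ih]
      simp

theorem cnt_count (G : SimpleGraph V) (v₁ : V) (l : List V) (hl : Good G v₁ l) (a : V) :
    l.count a = (∑ F, ∑ x, cnt l (F, x, a)) + if v₁ = a then 1 else 0 := by
  induction l with
  | nil => simp [Good] at hl
  | cons y l ih =>
    cases l with
    | nil =>
      simp only [Good] at hl
      simp [cnt, hl, List.count_cons]
    | cons x t =>
      rw [List.count_cons, ih hl.2]
      simp only [cnt, Finset.sum_add_distrib]
      rw [add_right_comm]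
      congr 2
      by_cases hy : a = y
      · simp [hy, Prod.ext_iff, Finset.sum_ite_eq', ite_and]
      · simp [hy, Ne.symm hy, Prod.ext_iff]

theorem cnt_supp (G : SimpleGraph V) (v₁ : V) (l : List V) (hl : Good G v₁ l)
    (F : Finset (Sym2 V)) (x y : V) (h : cnt l (F, x, y) ≠ 0) :
    F ⊆ pathEdges l ∧ s(x, y) ∈ pathEdges l ∧ G.Adj x y := by
  induction l with
  | nil => simp [cnt] at h
  | cons b l ih =>
    cases l with
    | nil => simp [cnt] at h
    | cons a t =>
      by_cases h0 : cnt (a :: t) (F, x, y) = 0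
      · have : (F, x, y) = (pathEdges (a :: t), a, b) := by
          by_contra h1
          simp [cnt, h0, h1] at h
        simp only [Prod.mk.injEq] at this
        obtain ⟨rfl, rfl, rfl⟩ := this
        refine ⟨Finset.subset_insert _ _, ?_, hl.1⟩
        rw [pathEdges, Sym2.eq_swap]
        exact Finset.mem_insert_self _ _
      · obtain ⟨h1, h2, h3⟩ := ih hl.2 h0
        exact ⟨h1.trans (Finset.subset_insert _ _), Finset.mem_insert_of_mem h2, h3⟩

theorem cnt_new (G : SimpleGraph V) (v₁ : V) (l : List V) (hl : Good G v₁ l)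
    (F : Finset (Sym2 V)) (x y : V) (h : s(x, y) ∉ F) : cnt l (F, x, y) ≤ 1 := by
  induction l with
  | nil => simp [cnt]
  | cons b l ih =>
    cases l with
    | nil => simp [cnt]
    | cons a t =>
      by_cases h0 : (F, x, y) = (pathEdges (a :: t), a, b)
      · have h1 : cnt (a :: t) (F, x, y) = 0 := by
          by_contra h1
          have := (cnt_supp G v₁ _ hl.2 _ _ _ h1).2.1
          simp only [Prod.mk.injEq] at h0
          rw [← h0.1] at this
          exact h this
        simp only [cnt, h1]
        split_ifs <;> simp
      · simp only [cnt, if_neg h0]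
        simpa using ih hl.2

def Dv (l : List V) (F : Finset (Sym2 V)) (a : V) : ℝ :=
  (∑ y, (cnt l (F, a, y) : ℝ)) - ∑ y, (cnt l (F, y, a) : ℝ)

theorem Dv_cons (y x : V) (t : List V) (F : Finset (Sym2 V)) (a : V) :
    Dv (y :: x :: t) F a = Dv (x :: t) F a +
      if F = pathEdges (x :: t) then (if x = a then 1 else 0) - (if y = a then 1 else 0) else 0 := by
  unfold Dv
  simp only [cnt, Nat.cast_add, Finset.sum_add_distrib, Prod.mk.injEq]
  by_cases hF : F = pathEdges (x :: t)
  · have e1 : (∑ y', (((if F = pathEdges (x :: t) ∧ a = x ∧ y' = y then 1 else 0 : ℕ)) : ℝ)) =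
        if x = a then 1 else 0 := by
      by_cases h1 : x = a
      · simp [hF, h1]
      · simp [hF, h1, Ne.symm h1]
    have e2 : (∑ y', (((if F = pathEdges (x :: t) ∧ y' = x ∧ a = y then 1 else 0 : ℕ)) : ℝ)) =
        if y = a then 1 else 0 := by
      by_cases h1 : y = a
      · simp [hF, h1]
      · simp [hF, h1, Ne.symm h1]
    rw [e1, e2, if_pos hF]; ring
  · simp [hF]

theorem abs_ind_sub (P Q : Prop) [Decidable P] [Decidable Q] :
    |(if P then (1 : ℝ) else 0) - (if Q then 1 else 0)| ≤ 1 := by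
  split_ifs <;> norm_num

theorem Dv_bound_aux (G : SimpleGraph V) (v₁ : V) (x : V) (t : List V)
    (hl : Good G v₁ (x :: t)) (F : Finset (Sym2 V)) :
    (F = pathEdges (x :: t) → ∃ s, ∀ a, Dv (x :: t) F a =
      (if s = a then 1 else 0) - (if x = a then 1 else 0)) ∧
    ∀ a, |Dv (x :: t) F a| ≤ 1 := by
  induction t generalizing x with
  | nil => 
    have : ∀ a, Dv [x] F a = 0 := fun a => by simp [Dv, cnt]
    exact ⟨fun _ => ⟨x, fun a => by simp [this]⟩, fun a => by simp [this]⟩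
  | cons z t ih =>
    obtain ⟨h1, h2⟩ := ih z hl.2
    suffices h : (F = pathEdges (x :: z :: t) → ∃ s, ∀ a, Dv (x :: z :: t) F a =
      (if s = a then 1 else 0) - (if x = a then 1 else 0)) ∧
      (F ≠ pathEdges (x :: z :: t) → ∀ a, |Dv (x :: z :: t) F a| ≤ 1) by
      refine ⟨h.1, fun a => ?_⟩
      by_cases hF : F = pathEdges (x :: z :: t)
      · obtain ⟨s, hs⟩ := h.1 hF
        rw [hs]
        exact abs_ind_sub _ _
      · exact h.2 hF a
    by_cases hF : F = pathEdges (z :: t)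
    · obtain ⟨s, hs⟩ := h1 hF
      have key : ∀ a, Dv (x :: z :: t) F a =
          (if s = a then 1 else 0) - (if x = a then 1 else 0) := by
        intro a
        rw [Dv_cons, hs, if_pos hF]; ring
      exact ⟨fun _ => ⟨s, key⟩, fun _ a => by rw [key]; exact abs_ind_sub _ _⟩
    · have key : ∀ a, Dv (x :: z :: t) F a = Dv (z :: t) F a := by
        intro a; rw [Dv_cons, if_neg hF, add_zero]
      refine ⟨fun h => ⟨x, fun a => ?_⟩, fun _ a => by rw [key]; exact h2 a⟩
      have h0 : ∀ b c, cnt (z :: t) (F, b, c) = 0 := by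
        intro b c
        by_contra h0
        have := (cnt_supp G v₁ _ hl.2 _ _ _ h0).1
        apply hF
        refine this.antisymm ?_
        rw [h]
        exact Finset.subset_insert _ _
      rw [key]
      simp [Dv, h0]

theorem Dv_bound (G : SimpleGraph V) (v₁ : V) (l : List V)
    (hl : Good G v₁ l) (F : Finset (Sym2 V)) (a : V) : |Dv l F a| ≤ 1 := by
  cases l with
  | nil => simp [Good] at hl
  | cons x t => exact (Dv_bound_aux G v₁ x t hl F).2 a

/-! chains of edge sets -/

def ValidC (G : SimpleGraph V) [DecidableRel G.Adj] (v₁ : V) : List (Sym2 V) → Prop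
  | [] => True
  | e :: c => ValidC G v₁ c ∧ e ∈ G.edgeFinset ∧ e ∉ c ∧ (c = [] → v₁ ∈ e) ∧
      (c ≠ [] → ∃ e' ∈ c, edgeAdj e e')

theorem ValidC.nodup {G : SimpleGraph V} [DecidableRel G.Adj] {v₁ : V} {c : List (Sym2 V)}
    (h : ValidC G v₁ c) : c.Nodup ∧ c.toFinset ⊆ G.edgeFinset := by
  induction c with
  | nil => simp
  | cons e c ih =>
    obtain ⟨h1, h2, h3, -, -⟩ := h
    refine ⟨List.nodup_cons.2 ⟨h3, (ih h1).1⟩, ?_⟩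
    rw [List.toFinset_cons]
    exact Finset.insert_subset h2 (ih h1).2

theorem exists_nbr (G : SimpleGraph V) (hG : G.Connected)
    (hV : 3 ≤ Fintype.card V) (v : V) : ∃ w, G.Adj v w := by
  have : Nontrivial V := Fintype.one_lt_card_iff_nontrivial.1 (by omega)
  exact hG.preconnected.exists_adj_of_nontrivial v

theorem ValidC.extend1 {G : SimpleGraph V} [DecidableRel G.Adj] (hG : G.Connected)
    (hV : 3 ≤ Fintype.card V) {v₁ : V} {c : List (Sym2 V)}
    (h : ValidC G v₁ c) (hc : c.toFinset ≠ G.edgeFinset) : ∃ e, ValidC G v₁ (e :: c) := by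
  by_cases hn : c = []
  · obtain ⟨w, hw⟩ := exists_nbr G hG hV v₁
    subst hn
    exact ⟨s(v₁, w), trivial, by simpa using hw, by simp, by simp, by simp⟩
  · by_contra hno
    push Not at hno
    have hclosed : ∀ e ∈ G.edgeFinset, (∃ e' ∈ c, edgeAdj e e') → e ∈ c := by
      intro e he hadj
      by_contra hec
      exact hno e ⟨h, he, hec, fun h0 => absurd h0 hn, fun _ => hadj⟩
    apply hc
    refine h.nodup.2.antisymm fun e he => ?_
    obtain ⟨e0, he0⟩ := List.exists_mem_of_ne_nil c hn
    have hall : ∀ v, ∃ e' ∈ c, v ∈ e' := by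
      have hstart : ∃ v, v ∈ e0 := by
        induction e0 with | _ a b => exact ⟨a, by simp⟩
      obtain ⟨v0, hv0⟩ := hstart
      intro v
      obtain ⟨w⟩ := hG.preconnected v0 v
      have : ∀ {a b : V}, G.Walk a b → (∃ e' ∈ c, a ∈ e') → ∃ e' ∈ c, b ∈ e' := by
        intro a b w
        induction w with
        | nil => exact id
        | @cons a b d hab _ ih =>
          rintro ⟨e', he', ha⟩
          refine ih ⟨s(a, b), hclosed _ (by simpa using hab) ⟨e', he', a, by simp, ha⟩, by simp⟩
      exact this w ⟨e0, he0, hv0⟩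
    rw [List.mem_toFinset]
    apply hclosed e he
    induction e with | _ a b =>
    obtain ⟨e', he', ha⟩ := hall a
    exact ⟨e', he', a, by simp, ha⟩

theorem ValidC.extend {G : SimpleGraph V} [DecidableRel G.Adj] (hG : G.Connected)
    (hV : 3 ≤ Fintype.card V) {v₁ : V} (k : ℕ) : ∀ {c : List (Sym2 V)}
    (_ : ValidC G v₁ c) (_ : c.length + k = G.edgeFinset.card), 
    ∃ c', ValidC G v₁ c' ∧ c <:+ c' ∧ c'.length = G.edgeFinset.card := by
  induction k with
  | zero => intro c h hc; exact ⟨c, h, List.suffix_refl _, hc⟩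
  | succ k ih =>
    intro c h hc
    obtain ⟨e, he⟩ := h.extend1 hG hV (by
      intro h0
      have := List.toFinset_card_of_nodup h.nodup.1
      rw [h0] at this
      omega)
    obtain ⟨c', h1, h2, h3⟩ := ih he (by simp; omega)
    exact ⟨c', h1, (List.suffix_cons e c).trans h2, h3⟩

theorem ValidC.drop {G : SimpleGraph V} [DecidableRel G.Adj] {v₁ : V} {c c' : List (Sym2 V)}
    (h : ValidC G v₁ c) (hs : c' <:+ c) : ValidC G v₁ c' := by
  induction c with
  | nil => simp at hs; subst hs; trivial
  | cons e c ih =>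
    rcases List.suffix_cons_iff.1 hs with rfl | h'
    · exact h
    · exact ih h.1 h'

theorem ValidC.toSeq {G : SimpleGraph V} [DecidableRel G.Adj] {v₁ : V} {c : List (Sym2 V)}
    (h : ValidC G v₁ c) (hc : c.length = G.edgeFinset.card) :
    (fun k : Fin G.edgeFinset.card => (c.drop (G.edgeFinset.card - (k + 1))).toFinset)
      ∈ seqE G v₁ := by
  have hv : ∀ j, ValidC G v₁ (c.drop j) := fun j => h.drop (List.drop_suffix _ _)
  have hstep : ∀ k l : Fin G.edgeFinset.card, (k : ℕ) + 1 = l →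
      ∃ e, c.drop (G.edgeFinset.card - (l + 1)) = e :: c.drop (G.edgeFinset.card - (k + 1)) := by
    intro k l hkl
    have hl := l.2
    have h1 := List.drop_eq_getElem_cons (l := c) (i := G.edgeFinset.card - (l + 1)) (by omega)
    rw [show G.edgeFinset.card - (l + 1) + 1 = G.edgeFinset.card - (k + 1) by omega] at h1
    exact ⟨_, h1⟩
  refine ⟨fun k => (hv _).nodup.2, fun k => ?_, fun k l hkl => ?_, fun k hk => ?_,
    fun k l hkl e he => ?_⟩
  · have := k.2
    rw [List.toFinset_card_of_nodup (hv _).nodup.1, List.length_drop]; omega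
  · obtain ⟨e, he⟩ := hstep k l hkl
    have := hv (G.edgeFinset.card - (l + 1))
    simp only [he] at this ⊢
    rw [List.toFinset_cons]
    exact Finset.ssubset_insert (by simpa using this.2.2.1)
  · have hk2 := k.2
    have h1 := hv (G.edgeFinset.card - (k + 1))
    have h2 : (c.drop (G.edgeFinset.card - (k + 1))).length = 1 := by
      rw [List.length_drop]; omega
    obtain ⟨e, he⟩ := List.length_eq_one_iff.1 h2
    simp only [he] at h1 ⊢
    exact ⟨e, by simp, h1.2.2.2.1 rfl⟩
  · obtain ⟨e2, he2⟩ := hstep k l hkl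
    have h1 := hv (G.edgeFinset.card - (l + 1))
    simp only [he2, List.toFinset_cons, Finset.mem_sdiff, Finset.mem_insert, List.mem_toFinset]
      at he h1 ⊢
    have : e = e2 := by tauto
    subst this
    refine h1.2.2.2.2 ?_
    intro h0
    have h3 := congrArg List.length h0
    have := k.2
    rw [List.length_drop, List.length_nil] at h3
    omega

theorem head_mem (G : SimpleGraph V) (v₁ : V) (x : V) (t : List V) (hl : Good G v₁ (x :: t)) :
    (t = [] ∧ x = v₁ ∧ pathEdges (x :: t) = ∅) ∨ ∃ e ∈ pathEdges (x :: t), x ∈ e := by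
  cases t with
  | nil => left; exact ⟨rfl, hl, rfl⟩
  | cons y t => right; exact ⟨s(x, y), by simp [pathEdges], by simp⟩

theorem good_chain (G : SimpleGraph V) [DecidableRel G.Adj] (v₁ : V) (l : List V)
    (hl : Good G v₁ l) : ∃ c, ValidC G v₁ c ∧ c.toFinset = pathEdges l ∧
      ∀ F x y, cnt l (F, x, y) ≠ 0 → ∃ c', c' <:+ c ∧ c'.toFinset = F := by
  induction l with
  | nil => simp [Good] at hl
  | cons y l ih =>
    cases l with
    | nil => exact ⟨[], trivial, by simp [pathEdges], fun F x y h => by simp [cnt] at h⟩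
    | cons x t =>
      obtain ⟨c, h1, h2, h3⟩ := ih hl.2
      have hcnt : ∀ c2, c <:+ c2 → ∀ F a b, cnt (y :: x :: t) (F, a, b) ≠ 0 → 
          ∃ c', c' <:+ c2 ∧ c'.toFinset = F := by
        intro c2 hc2 F a b h
        by_cases h0 : cnt (x :: t) (F, a, b) = 0
        · have : (F, a, b) = (pathEdges (x :: t), x, y) := by
            by_contra h1
            simp [cnt, h0, h1] at h
          simp only [Prod.mk.injEq] at this
          exact ⟨c, hc2, by rw [h2, this.1]⟩
        · obtain ⟨c', hc', h'⟩ := h3 _ _ _ h0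
          exact ⟨c', hc'.trans hc2, h'⟩
      by_cases hm : s(y, x) ∈ pathEdges (x :: t)
      · exact ⟨c, h1, by rw [h2, pathEdges, Finset.insert_eq_of_mem hm],
          hcnt c (List.suffix_refl _)⟩
      · refine ⟨s(y, x) :: c, ⟨h1, ?_, ?_, ?_, ?_⟩, ?_, hcnt _ (List.suffix_cons _ _)⟩
        · simpa using hl.1.symm
        · rw [← List.mem_toFinset, h2]; exact hm
        · rintro rfl
          rcases head_mem G v₁ x t hl.2 with h | ⟨e, he, -⟩
          · simp [h.2.1]
          · rw [← h2] at he; simp at he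
        · intro hne
          rcases head_mem G v₁ x t hl.2 with h | ⟨e, he, hx⟩
          · rw [h.2.2] at h2; simp at h2; exact absurd h2 hne
          · rw [← h2, List.mem_toFinset] at he
            exact ⟨e, he, x, by simp, hx⟩
        · rw [List.toFinset_cons, h2]; rfl

theorem good_seq (G : SimpleGraph V) [DecidableRel G.Adj] (hG : G.Connected)
    (hV : 3 ≤ Fintype.card V) (v₁ : V) (l : List V)
    (hl : Good G v₁ l) : ∃ Es ∈ seqE G v₁, 
      ∀ F x y, F ≠ ∅ → cnt l (F, x, y) ≠ 0 → ∃ k, F = Es k := by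
  obtain ⟨c, h1, h2, h3⟩ := good_chain G v₁ l hl
  have hlen : c.length ≤ G.edgeFinset.card := by
    rw [← List.toFinset_card_of_nodup h1.nodup.1]
    exact Finset.card_le_card h1.nodup.2
  obtain ⟨c', h4, h5, h6⟩ := h1.extend hG hV (G.edgeFinset.card - c.length) (by omega)
  refine ⟨_, h4.toSeq h6, fun F x y hF h => ?_⟩
  obtain ⟨c2, h7, h8⟩ := h3 F x y h
  have h9 := h7.trans h5
  have hpos : c2.length ≠ 0 := by
    intro h0
    rw [List.length_eq_zero_iff] at h0
    subst h0
    exact hF h8.symm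
  have hle := h9.length_le
  refine ⟨⟨c2.length - 1, by omega⟩, ?_⟩
  simp only
  rw [← h8, List.suffix_iff_eq_drop.1 h9, h6]
  congr 2
  simp only [List.length_drop, h6]
  omega

theorem exists_seq (G : SimpleGraph V) [DecidableRel G.Adj] (hG : G.Connected)
    (hV : 3 ≤ Fintype.card V) (v₁ : V) : ∃ Es, Es ∈ seqE G v₁ := by
  obtain ⟨Es, h, -⟩ := good_seq G hG hV v₁ [v₁] rfl
  exact ⟨Es, h⟩

end Types

section Rate

variable {V : Type} [Fintype V] [DecidableEq V]

def phiF (p m : V → V → ℝ) : ℝ :=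
  ∑ x, ∑ y, m x y * (Real.log (m x y) - Real.log (∑ z, m x z) - Real.log (p x y))

theorem phiF_eq (p m : V → V → ℝ) : phiF p m = ∑ x, ((∑ y, (m x y * Real.log (m x y) -
    m x y * Real.log (p x y))) - (∑ z, m x z) * Real.log (∑ z, m x z)) := by
  unfold phiF
  refine Finset.sum_congr rfl fun x _ => ?_
  rw [Finset.sum_mul, ← Finset.sum_sub_distrib]
  exact Finset.sum_congr rfl fun y _ => by ring

theorem phiF_cont (p : V → V → ℝ) : Continuous (phiF p) := by
  have : phiF p = fun m => ∑ x, ((∑ y, (m x y * Real.log (m x y) -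
    m x y * Real.log (p x y))) - (∑ z, m x z) * Real.log (∑ z, m x z)) := by
    funext m; exact phiF_eq p m
  rw [this]
  refine continuous_finsetSum _ fun x _ => Continuous.sub ?_ ?_
  · refine continuous_finsetSum _ fun y _ => Continuous.sub ?_ ?_
    · exact Real.continuous_mul_log.comp (f := fun m : V → V → ℝ => m x y) (by fun_prop)
    · fun_prop
  · exact Real.continuous_mul_log.comp (f := fun m : V → V → ℝ => ∑ z, m x z) (by fun_prop)

theorem coe_sum' {ι : Type} (s : Finset ι) (f : ι → ℝ) :
    ((∑ i ∈ s, f i : ℝ) : EReal) = ∑ i ∈ s, (f i : EReal) := by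
  induction s using Finset.induction_on with
  | empty => simp
  | insert a s ha ih => rw [Finset.sum_insert ha, Finset.sum_insert ha, EReal.coe_add, ih]

theorem relEntInt_coe (G : SimpleGraph V) [DecidableRel G.Adj] {δ : ℝ} (hδ : 0 < δ)
    {F : Finset (Sym2 V)} (hF : F ⊆ G.edgeFinset) {q : V → V → ℝ} (hq : q ∈ TE F) (ν : V → ℝ) :
    relEntInt ν q (phat G δ F) =
      ((∑ a, ν a * ∑ b, q a b * Real.log (q a b / phat G δ F a b) : ℝ) : EReal) := by
  unfold relEntInt
  rw [coe_sum']
  refine Finset.sum_congr rfl fun a _ => ?_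
  rw [EReal.coe_mul, relEnt, if_pos]
  intro b hb
  by_contra h
  have h1 := hF (hq.2.2 a b h)
  rw [SimpleGraph.mem_edgeFinset, SimpleGraph.mem_edgeSet] at h1
  exact (phat_pos G hδ F h1).ne' hb

theorem cost_eq (G : SimpleGraph V) [DecidableRel G.Adj] {δ : ℝ} (hδ : 0 < δ)
    {F : Finset (Sym2 V)} (hF : F ⊆ G.edgeFinset) {q : V → V → ℝ} (hq : q ∈ TE F) (ν : V → ℝ)
    (hν : ∀ x, ν x ≠ 0 → memVerts F x) (r : ℝ) (m : V → V → ℝ)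
    (hm : ∀ x y, m x y = r * (ν x * q x y)) :
    phiF (phat G δ F) m = r * ∑ a, ν a * ∑ b, q a b * Real.log (q a b / phat G δ F a b) := by
  unfold phiF
  rw [Finset.mul_sum]
  refine Finset.sum_congr rfl fun x _ => ?_
  rw [Finset.mul_sum, Finset.mul_sum]
  refine Finset.sum_congr rfl fun y _ => ?_
  by_cases hr : r = 0
  · simp [hm, hr]
  by_cases hx : ν x = 0
  · simp [hm, hx]
  by_cases hqz : q x y = 0
  · simp [hm, hqz]
  have hsum : ∑ z, m x z = r * ν x := by
    simp only [hm]
    rw [← Finset.mul_sum, ← Finset.mul_sum, hq.2.1 x (hν x hx), mul_one]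
  have h1 := hF (hq.2.2 x y hqz)
  rw [SimpleGraph.mem_edgeFinset, SimpleGraph.mem_edgeSet] at h1
  have hp := (phat_pos G hδ F h1).ne'
  rw [hsum, hm, Real.log_div hqz hp, ← mul_assoc r, Real.log_mul (mul_ne_zero hr hx) hqz]
  ring

def uu (F : Finset (Sym2 V)) (x y : V) : ℝ := if s(x, y) ∈ F then 1 else 0

theorem uu_bal (F : Finset (Sym2 V)) (a : V) : ∑ y, uu F a y = ∑ y, uu F y a := by
  refine Finset.sum_congr rfl fun y _ => ?_
  simp only [uu, Sym2.eq_swap]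

theorem uu_nonneg (F : Finset (Sym2 V)) (x y : V) : 0 ≤ uu F x y := by
  unfold uu; split_ifs <;> simp

theorem memVerts_iff (F : Finset (Sym2 V)) (x : V) : memVerts F x ↔ ∃ y, s(x, y) ∈ F := by
  constructor
  · rintro ⟨e, he, hx⟩
    obtain ⟨y, rfl⟩ := hx
    exact ⟨y, he⟩
  · rintro ⟨y, hy⟩
    exact ⟨_, hy, by simp⟩

theorem uu_row_pos (F : Finset (Sym2 V)) {x : V} (hx : memVerts F x) : 0 < ∑ y, uu F x y := by
  obtain ⟨y, hy⟩ := (memVerts_iff F x).1 hx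
  refine Finset.sum_pos' (fun z _ => uu_nonneg F x z) ⟨y, Finset.mem_univ _, ?_⟩
  simp [uu, hy]

theorem uu_tot_pos {F : Finset (Sym2 V)} (hF : F.Nonempty) : 0 < ∑ x, ∑ y, uu F x y := by
  obtain ⟨e, he⟩ := hF
  induction e with | _ a b =>
  refine Finset.sum_pos' (fun z _ => Finset.sum_nonneg fun w _ => uu_nonneg F z w)
    ⟨a, Finset.mem_univ _, uu_row_pos F ((memVerts_iff F a).2 ⟨b, he⟩)⟩

theorem phase_tuple0 {F : Finset (Sym2 V)} (m : V → V → ℝ)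
    (h0 : ∀ x y, 0 ≤ m x y) (hs : ∀ x y, s(x, y) ∉ F → m x y = 0)
    (hb : ∀ a, ∑ y, m a y = ∑ y, m y a) (ht : ∑ x, ∑ y, m x y ≠ 0) :
    ∃ (ν : ProbMeas V) (q : V → V → ℝ), q ∈ TE F ∧ (∀ x, ν.1 x ≠ 0 → memVerts F x) ∧
      Invariant ν.1 q ∧ ∀ x y, m x y = (∑ x, ∑ y, m x y) * (ν.1 x * q x y) := by
  set r := ∑ x, ∑ y, m x y with hr
  have hr0 : 0 ≤ r := Finset.sum_nonneg fun x _ => Finset.sum_nonneg fun y _ => h0 x y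
  let q : V → V → ℝ := fun x y => if ∑ z, m x z = 0 then uu F x y / ∑ z, uu F x z
    else m x y / ∑ z, m x z
  have hrow : ∀ x, ∑ z, m x z = 0 → ∀ y, m x y = 0 := fun x hx y =>
    (Finset.sum_eq_zero_iff_of_nonneg fun z _ => h0 x z).1 hx y (Finset.mem_univ _)
  have hmq : ∀ x y, (∑ z, m x z) * q x y = m x y := by
    intro x y
    by_cases hx : ∑ z, m x z = 0
    · rw [hx, zero_mul, hrow x hx]
    · simp only [q, if_neg hx]; field_simp
  refine ⟨⟨fun x => (∑ y, m x y) / r, fun x => div_nonneg (Finset.sum_nonneg fun y _ => h0 x y) hr0,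
    by rw [← Finset.sum_div]; exact div_self ht⟩, q, ⟨?_, ?_, ?_⟩, ?_, ?_, ?_⟩
  · intro x y
    simp only [q]
    split_ifs
    · exact div_nonneg (uu_nonneg _ _ _) (Finset.sum_nonneg fun z _ => uu_nonneg _ _ _)
    · exact div_nonneg (h0 _ _) (Finset.sum_nonneg fun z _ => h0 _ _)
  · intro x hx
    simp only [q]
    split_ifs with h
    · rw [← Finset.sum_div]; exact div_self (uu_row_pos F hx).ne'
    · rw [← Finset.sum_div]; exact div_self h
  · intro x y hxy
    by_contra h
    apply hxy
    simp [q, uu, hs x y h, h]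
  · intro x hx
    rw [memVerts_iff]
    by_contra h
    push Not at h
    apply hx
    simp only
    rw [Finset.sum_eq_zero fun y _ => hs x y (h y), zero_div]
  · intro y
    simp only
    rw [hb y, Finset.sum_div]
    refine Finset.sum_congr rfl fun x _ => ?_
    rw [div_mul_eq_mul_div, hmq]
  · intro x y
    simp only
    rw [div_mul_eq_mul_div, hmq]
    field_simp

theorem phase_tuple {F : Finset (Sym2 V)} (hF : F.Nonempty) (m : V → V → ℝ)
    (h0 : ∀ x y, 0 ≤ m x y) (hs : ∀ x y, s(x, y) ∉ F → m x y = 0)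
    (hb : ∀ a, ∑ y, m a y = ∑ y, m y a) :
    ∃ (ν : ProbMeas V) (q : V → V → ℝ), q ∈ TE F ∧ (∀ x, ν.1 x ≠ 0 → memVerts F x) ∧
      Invariant ν.1 q ∧ ∀ x y, m x y = (∑ x, ∑ y, m x y) * (ν.1 x * q x y) := by
  by_cases ht : ∑ x, ∑ y, m x y = 0
  · obtain ⟨ν, q, h1, h2, h3, -⟩ := phase_tuple0 (F := F) (uu F) (uu_nonneg F)
      (fun x y h => by simp [uu, h]) (uu_bal F) (uu_tot_pos hF).ne'
    refine ⟨ν, q, h1, h2, h3, fun x y => ?_⟩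
    rw [ht, zero_mul]
    have h4 := (Finset.sum_eq_zero_iff_of_nonneg
      (fun x _ => Finset.sum_nonneg fun y _ => h0 x y)).1 ht x (Finset.mem_univ _)
    exact (Finset.sum_eq_zero_iff_of_nonneg fun z _ => h0 x z).1 h4 y (Finset.mem_univ _)
  · exact phase_tuple0 m h0 hs hb ht

def KK (G : SimpleGraph V) [DecidableRel G.Adj] (Es : Fin G.edgeFinset.card → Finset (Sym2 V)) :
    Set (Fin G.edgeFinset.card → V → V → ℝ) :=
  {M | (∀ k x y, 0 ≤ M k x y) ∧ (∀ k x y, s(x, y) ∉ Es k → M k x y = 0) ∧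
    (∀ k a, ∑ y, M k a y = ∑ y, M k y a) ∧ ∑ k, ∑ x, ∑ y, M k x y = 1}

def PhiK (G : SimpleGraph V) [DecidableRel G.Adj] (δ : ℝ)
    (Es : Fin G.edgeFinset.card → Finset (Sym2 V))
    (M : Fin G.edgeFinset.card → V → V → ℝ) : ℝ := ∑ k, phiF (phat G δ (Es k)) (M k)

theorem seqE_ne {G : SimpleGraph V} [DecidableRel G.Adj] {v₁ : V}
    {Es : Fin G.edgeFinset.card → Finset (Sym2 V)} (h : Es ∈ seqE G v₁) (k) : (Es k).Nonempty := by
  rw [← Finset.card_pos, h.2.1 k]; omega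

theorem lemA (G : SimpleGraph V) [DecidableRel G.Adj] {v₁ : V} {δ : ℝ} (hδ : 0 < δ)
    {Es : Fin G.edgeFinset.card → Finset (Sym2 V)} (hE : Es ∈ seqE G v₁)
    {M : Fin G.edgeFinset.card → V → V → ℝ} (hM : M ∈ KK G Es) (ν : ProbMeas V)
    (hν : ∀ x, ∑ k, ∑ y, M k x y = ν.1 x) : Ifun G v₁ δ ν ≤ (PhiK G δ Es M : EReal) := by
  obtain ⟨h0, hs, hb, ht⟩ := hM
  choose νs qs h1 h2 h3 h4 using fun k => phase_tuple (seqE_ne hE k) (M k) (h0 k) (hs k) (hb k)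
  refine sInf_le ⟨νs, fun k => ∑ x, ∑ y, M k x y, Es, qs, hE,
    fun k => Finset.sum_nonneg fun x _ => Finset.sum_nonneg fun y _ => h0 k x y, ht, h2, ?_, h1, h3, ?_⟩
  · intro x
    rw [← hν]
    refine Finset.sum_congr rfl fun k _ => ?_
    by_cases hx : (νs k).1 x = 0
    · rw [hx, mul_zero]
      exact (Finset.sum_eq_zero fun y _ => by rw [h4 k x y, hx]; ring).symm
    · calc _ = (∑ x, ∑ y, M k x y) * ((νs k).1 x * ∑ y, qs k x y) := by
            rw [(h1 k).2.1 x (h2 k x hx), mul_one]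
        _ = _ := by
            rw [Finset.mul_sum, Finset.mul_sum]
            exact Finset.sum_congr rfl fun y _ => (h4 k x y).symm
  · rw [PhiK, coe_sum']
    refine Finset.sum_congr rfl fun k _ => ?_
    rw [relEntInt_coe G hδ (hE.1 k) (h1 k), ← EReal.coe_mul,
      cost_eq G hδ (hE.1 k) (h1 k) (νs k).1 (h2 k) _ _ (h4 k)]

theorem lemB (G : SimpleGraph V) [DecidableRel G.Adj] {v₁ : V} {δ : ℝ} (hδ : 0 < δ)
    (ν : ProbMeas V) (β : EReal) (hβ : Ifun G v₁ δ ν < β) :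
    ∃ Es ∈ seqE G v₁, ∃ M ∈ KK G Es, (∀ x, ∑ k, ∑ y, M k x y = ν.1 x) ∧
      (PhiK G δ Es M : EReal) < β := by
  obtain ⟨c, ⟨νs, r, Es, qs, hE, hr, hr1, h2, hν, h1, h3, hc⟩, hcβ⟩ := sInf_lt_iff.1 hβ
  have hrow : ∀ k x, ∑ y, r k * ((νs k).1 x * qs k x y) = r k * (νs k).1 x := by
    intro k x
    rw [← Finset.mul_sum, ← Finset.mul_sum]
    by_cases hx : (νs k).1 x = 0
    · simp [hx]
    · rw [(h1 k).2.1 x (h2 k x hx), mul_one]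
  refine ⟨Es, hE, fun k x y => r k * ((νs k).1 x * qs k x y), ⟨?_, ?_, ?_, ?_⟩, ?_, ?_⟩
  · intro k x y
    exact mul_nonneg (hr k) (mul_nonneg ((νs k).2.1 x) ((h1 k).1 x y))
  · intro k x y h
    have : qs k x y = 0 := by
      by_contra h'; exact h ((h1 k).2.2 x y h')
    simp [this]
  · intro k a
    rw [hrow, ← Finset.mul_sum, h3 k a]
  · simp only [hrow]
    refine (Finset.sum_congr rfl fun k _ => ?_).trans hr1
    rw [← Finset.mul_sum, (νs k).2.2, mul_one]
  · intro x
    simp only [hrow]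
    exact hν x
  · convert hcβ
    rw [hc, PhiK, coe_sum']
    refine Finset.sum_congr rfl fun k _ => ?_
    rw [relEntInt_coe G hδ (hE.1 k) (h1 k), ← EReal.coe_mul,
      cost_eq G hδ (hE.1 k) (h1 k) (νs k).1 (h2 k) (r k) _ (fun _ _ => rfl)]

theorem PhiK_cont (G : SimpleGraph V) [DecidableRel G.Adj] (δ : ℝ)
    (Es : Fin G.edgeFinset.card → Finset (Sym2 V)) : Continuous (PhiK G δ Es) := by
  refine continuous_finsetSum _ fun k _ => ?_
  exact (phiF_cont _).comp (continuous_apply k)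

theorem KK_compact (G : SimpleGraph V) [DecidableRel G.Adj] 
    (Es : Fin G.edgeFinset.card → Finset (Sym2 V)) : IsCompact (KK G Es) := by
  have hbox : IsCompact (Set.univ.pi fun _ : Fin G.edgeFinset.card => Set.univ.pi fun _ : V =>
      Set.univ.pi fun _ : V => Set.Icc (0 : ℝ) 1) :=
    isCompact_univ_pi fun _ => isCompact_univ_pi fun _ => isCompact_univ_pi fun _ => isCompact_Icc
  refine hbox.of_isClosed_subset ?_ ?_
  · have : KK G Es = (⋂ k, ⋂ x, ⋂ y, {M | 0 ≤ M k x y}) ∩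
        ((⋂ k, ⋂ x, ⋂ y, ⋂ (_ : s(x, y) ∉ Es k), {M | M k x y = 0}) ∩
        ((⋂ k, ⋂ a, {M | ∑ y, M k a y = ∑ y, M k y a}) ∩ {M | ∑ k, ∑ x, ∑ y, M k x y = 1})) := by
      ext M; simp [KK]
    rw [this]
    refine IsClosed.inter ?_ (IsClosed.inter ?_ (IsClosed.inter ?_ ?_))
    · exact isClosed_iInter fun k => isClosed_iInter fun x => isClosed_iInter fun y =>
        isClosed_le (by fun_prop) (by fun_prop)
    · exact isClosed_iInter fun k => isClosed_iInter fun x => isClosed_iInter fun y =>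
        isClosed_iInter fun _ => isClosed_eq (by fun_prop) (by fun_prop)
    · exact isClosed_iInter fun k => isClosed_iInter fun x => 
        isClosed_eq (by fun_prop) (by fun_prop)
    · exact isClosed_eq (by fun_prop) (by fun_prop)
  · rintro M ⟨h0, -, -, ht⟩ k - x - y -
    refine ⟨h0 k x y, ?_⟩
    rw [← ht]
    calc M k x y ≤ ∑ y, M k x y := Finset.single_le_sum (f := fun y => M k x y) 
            (fun z _ => h0 k x z) (Finset.mem_univ y)
      _ ≤ ∑ x, ∑ y, M k x y := Finset.single_le_sum (f := fun x => ∑ y, M k x y) 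
            (fun z _ => Finset.sum_nonneg fun w _ => h0 k z w) (Finset.mem_univ x)
      _ ≤ _ := Finset.single_le_sum (f := fun k => ∑ x, ∑ y, M k x y) 
            (fun j _ => Finset.sum_nonneg fun z _ => Finset.sum_nonneg fun w _ => h0 j z w)
            (Finset.mem_univ k)

theorem level_closed (G : SimpleGraph V) [DecidableRel G.Adj] (v₁ : V) {δ : ℝ} (hδ : 0 < δ)
    (y : EReal) : IsClosed {ν | Ifun G v₁ δ ν ≤ y} := by
  have key : {ν | Ifun G v₁ δ ν ≤ y} = ⋂ (β : ℝ) (_ : y < β),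
      ⋃ Es ∈ seqE G v₁, {ν : ProbMeas V | ν.1 ∈ 
        (fun (M : Fin G.edgeFinset.card → V → V → ℝ) (x : V) => ∑ k, ∑ y, M k x y) ''
          (KK G Es ∩ {M | PhiK G δ Es M ≤ β})} := by
    ext ν
    simp only [Set.mem_setOf_eq, Set.mem_iInter, Set.mem_iUnion, Set.mem_image]
    constructor
    · intro h β hβ
      obtain ⟨Es, hE, M, hM, h1, h2⟩ := lemB G hδ ν β (h.trans_lt hβ)
      exact ⟨Es, hE, M, ⟨hM, EReal.coe_le_coe_iff.1 h2.le⟩, funext h1⟩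
    · intro h
      refine EReal.le_of_forall_lt_iff_le.1 fun β hβ => ?_
      obtain ⟨Es, hE, M, ⟨hM, h2⟩, h1⟩ := h β hβ
      exact (lemA G hδ hE hM ν (fun x => congrFun h1 x)).trans (EReal.coe_le_coe_iff.2 h2)
  rw [key]
  refine isClosed_iInter fun β => isClosed_iInter fun _ => ?_
  refine (Set.toFinite _).isClosed_biUnion fun Es _ => ?_
  refine IsClosed.preimage continuous_subtype_val ?_
  refine IsCompact.isClosed (IsCompact.image ?_ (by fun_prop))
  exact (KK_compact G Es).inter_right (isClosed_le (PhiK_cont G δ Es) continuous_const)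

theorem probMeas_compact : IsCompact (Set.univ : Set (ProbMeas V)) := by
  have : CompactSpace (ProbMeas V) := isCompact_iff_compactSpace.1 (isCompact_stdSimplex ℝ V)
  exact isCompact_univ

theorem Ifun_lsc (G : SimpleGraph V) [DecidableRel G.Adj] (v₁ : V) {δ : ℝ} (hδ : 0 < δ) :
    LowerSemicontinuous (Ifun G v₁ δ) :=
  lowerSemicontinuous_iff_isClosed_preimage.2 fun y => level_closed G v₁ hδ y

theorem Ifun_level (G : SimpleGraph V) [DecidableRel G.Adj] (v₁ : V) {δ : ℝ} (hδ : 0 < δ)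
    (y : EReal) : IsCompact {ν | Ifun G v₁ δ ν ≤ y} :=
  probMeas_compact.of_isClosed_subset (level_closed G v₁ hδ y) (Set.subset_univ _)

end Rate

section Upper

variable {V : Type} [Fintype V] [DecidableEq V]

theorem phiF_smul (p m : V → V → ℝ) (h0 : ∀ x y, 0 ≤ m x y) {s : ℝ} (hs : 0 < s) :
    phiF p (fun x y => s * m x y) = s * phiF p m := by
  unfold phiF
  rw [Finset.mul_sum]
  refine Finset.sum_congr rfl fun x _ => ?_
  rw [Finset.mul_sum]
  refine Finset.sum_congr rfl fun y _ => ?_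
  by_cases h : m x y = 0
  · simp [h]
  have hpos : 0 < ∑ z, m x z :=
    Finset.sum_pos' (fun z _ => h0 x z) ⟨y, Finset.mem_univ _, lt_of_le_of_ne (h0 x y) (Ne.symm h)⟩
  rw [← Finset.mul_sum, Real.log_mul hs.ne' h, Real.log_mul hs.ne' hpos.ne']
  ring

def PhiA (p : Finset (Sym2 V) → V → V → ℝ) (M : Finset (Sym2 V) × V × V → ℝ) : ℝ :=
  ∑ F, phiF (p F) (fun x y => M (F, x, y))

theorem PhiA_cont (p : Finset (Sym2 V) → V → V → ℝ) : Continuous (PhiA p) := by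
  refine continuous_finsetSum _ fun F _ => ?_
  exact (phiF_cont _).comp (f := fun (M : Finset (Sym2 V) × V × V → ℝ) x y => M (F, x, y))
    (by fun_prop)

theorem PhiA_smul (p : Finset (Sym2 V) → V → V → ℝ) (M : Finset (Sym2 V) × V × V → ℝ)
    (h0 : ∀ i, 0 ≤ M i) {s : ℝ} (hs : 0 < s) :
    PhiA p (fun i => s * M i) = s * PhiA p M := by
  unfold PhiA
  rw [Finset.mul_sum]
  exact Finset.sum_congr rfl fun F _ => phiF_smul _ _ (fun x y => h0 _) hs

def qN (N : Finset (Sym2 V) × V × V → ℕ) (F : Finset (Sym2 V)) (x y : V) : ℝ :=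
  (N (F, x, y) : ℝ) / ∑ z, (N (F, x, z) : ℝ)

theorem qN_nonneg (N : Finset (Sym2 V) × V × V → ℕ) (F : Finset (Sym2 V)) (x y : V) :
    0 ≤ qN N F x y := by unfold qN; positivity

theorem qN_sum (N : Finset (Sym2 V) × V × V → ℕ) (F : Finset (Sym2 V)) (x : V) :
    ∑ y, qN N F x y ≤ 1 := by
  unfold qN
  rw [← Finset.sum_div]
  exact div_self_le_one _

theorem prod_type (p : Finset (Sym2 V) → V → V → ℝ) (N : Finset (Sym2 V) × V × V → ℕ)
    (hp : ∀ F x y, N (F, x, y) ≠ 0 → 0 < p F x y) :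
    (∏ i : Finset (Sym2 V) × V × V, p i.1 i.2.1 i.2.2 ^ N i) =
      Real.exp (-PhiA p (fun i => (N i : ℝ))) *
        ∏ i : Finset (Sym2 V) × V × V, qN N i.1 i.2.1 i.2.2 ^ N i := by
  have h1 : PhiA p (fun i => (N i : ℝ)) = ∑ i : Finset (Sym2 V) × V × V,
      (N i : ℝ) * (Real.log (N i) - Real.log (∑ z, (N (i.1, i.2.1, z) : ℝ)) -
        Real.log (p i.1 i.2.1 i.2.2)) := by
    unfold PhiA phiF
    rw [Fintype.sum_prod_type]
    refine Finset.sum_congr rfl fun F _ => ?_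
    rw [Fintype.sum_prod_type]
  rw [h1, ← Finset.sum_neg_distrib, Real.exp_sum, ← Finset.prod_mul_distrib]
  refine Finset.prod_congr rfl fun ⟨F, x, y⟩ _ => ?_
  by_cases h : N (F, x, y) = 0
  · simp [h]
  have hNp : (0 : ℝ) < N (F, x, y) := by exact_mod_cast Nat.pos_of_ne_zero h
  have hs : (0 : ℝ) < ∑ z, (N (F, x, z) : ℝ) :=
    Finset.sum_pos' (fun z _ => Nat.cast_nonneg _) ⟨y, Finset.mem_univ _, hNp⟩
  have hpp := hp F x y h
  have hq : 0 < qN N F x y := div_pos hNp hs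
  simp only
  rw [← Real.exp_log (pow_pos hpp _), ← Real.exp_log (pow_pos hq _), ← Real.exp_add,
    Real.log_pow, Real.log_pow, qN, Real.log_div hNp.ne' hs.ne']
  congr 1
  ring

theorem Ex_types (G : SimpleGraph V) [DecidableRel G.Adj] {δ : ℝ} (hδ : 0 < δ) (v₁ : V) (n : ℕ)
    (S : List V → Prop) (α : ℝ)
    (h : ∀ u : List V, u.length = n → Good G v₁ (u ++ [v₁]) → S (u ++ [v₁]) →
      α ≤ PhiA (phat G δ) (fun i => (cnt (u ++ [v₁]) i : ℝ))) :
    Ex (phat G δ) n (fun l => if S l then 1 else 0) [v₁] ≤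
      ((n : ℝ) + 1) ^ Fintype.card (Finset (Sym2 V) × V × V) * Real.exp (-α) := by
  have hE := Ex_mul_Wt (phat G δ) (fun l => if S l then 1 else 0) n [v₁]
  have hw : ∀ q : Finset (Sym2 V) → V → V → ℝ, Wt q [v₁] = 1 := by intro q; simp [Wt, stp]
  rw [hw, mul_one] at hE
  rw [hE]
  set T : Finset (Finset (Sym2 V) × V × V → ℕ) := Fintype.piFinset (fun _ => Finset.range (n + 1))
  have hWq : ∀ (N : Finset (Sym2 V) × V × V → ℕ) (l : List V), 0 ≤ Wt (qN N) l := by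
    intro N l
    rw [Wt_eq_prod]
    exact Finset.prod_nonneg fun i _ => pow_nonneg (qN_nonneg _ _ _ _) _
  calc _ ≤ ∑ u : Fin n → V, ∑ N ∈ T, Real.exp (-α) * Wt (qN N) ((List.ofFn u).reverse ++ [v₁]) := by
        refine Finset.sum_le_sum fun u _ => ?_
        set l := (List.ofFn u).reverse ++ [v₁] with hl
        have hnn : 0 ≤ ∑ N ∈ T, Real.exp (-α) * Wt (qN N) l :=
          Finset.sum_nonneg fun N _ => mul_nonneg (Real.exp_pos _).le (hWq _ _)
        by_cases hS : S l
        swap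
        · simpa [hS] using hnn
        by_cases hW : Wt (phat G δ) l = 0
        · simpa [hW] using hnn
        have hg := good_of_Wt G δ v₁ _ hW
        have hα := h _ (by simp) hg hS
        have hT : cnt l ∈ T := by
          rw [Fintype.mem_piFinset]
          intro i
          rw [Finset.mem_range]
          have h1 := cnt_sum l
          have h2 : cnt l i ≤ ∑ i, cnt l i :=
            Finset.single_le_sum (fun _ _ => Nat.zero_le _) (Finset.mem_univ i)
          have h3 : l.length = n + 1 := by simp [hl]
          omega
        refine le_trans ?_ (Finset.single_le_sum (f := fun N => Real.exp (-α) * Wt (qN N) l)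
          (fun N _ => mul_nonneg (Real.exp_pos _).le (hWq _ _)) hT)
        rw [if_pos hS, one_mul, Wt_eq_prod, prod_type _ _ ?_, Wt_eq_prod (qN (cnt l)) l]
        · refine mul_le_mul_of_nonneg_right (Real.exp_le_exp.2 (neg_le_neg hα)) ?_
          exact Finset.prod_nonneg fun i _ => pow_nonneg (qN_nonneg _ _ _ _) _
        · intro F x y hN
          exact phat_pos G hδ F (cnt_supp G v₁ l hg F x y hN).2.2
    _ = ∑ N ∈ T, Real.exp (-α) * ∑ u : Fin n → V, Wt (qN N) ((List.ofFn u).reverse ++ [v₁]) := by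
        rw [Finset.sum_comm]
        exact Finset.sum_congr rfl fun N _ => (Finset.mul_sum _ _ _).symm
    _ ≤ ∑ N ∈ T, Real.exp (-α) := by
        refine Finset.sum_le_sum fun N _ => ?_
        have h1 := Ex_mul_Wt (qN N) (fun _ => 1) n [v₁]
        rw [hw, mul_one] at h1
        simp only [one_mul] at h1
        rw [← h1]
        exact mul_le_of_le_one_right (Real.exp_pos _).le
          (Ex_one_le _ (qN_nonneg N) (qN_sum N) n v₁ [])
    _ = _ := by
        rw [Finset.sum_const, nsmul_eq_mul]
        congr 1
        simp [T]

theorem type_lb (G : SimpleGraph V) [DecidableRel G.Adj] (hG : G.Connected)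
    (hV : 3 ≤ Fintype.card V) (v₁ : V) {δ : ℝ} (hδ : 0 < δ) (C : Set (ProbMeas V)) (hC : IsClosed C)
    (α : ℝ) (hα : ∀ ν ∈ C, (α : EReal) < Ifun G v₁ δ ν) :
    ∀ᶠ n : ℕ in atTop, ∀ u : List V, u.length = n → Good G v₁ (u ++ [v₁]) →
      (∃ ν ∈ C, ∀ a, ν.1 a = ((u ++ [v₁]).count a : ℝ) / (n + 1)) →
      α ≤ PhiA (phat G δ) (fun i => ((n : ℝ) + 1)⁻¹ * (cnt (u ++ [v₁]) i : ℝ)) := by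
  by_contra hcon
  rw [not_eventually] at hcon
  obtain ⟨φ, hφ, hP⟩ := extraction_of_frequently_atTop hcon
  push Not at hP
  choose u hlen hgood hν hlt using hP
  choose νn hνC hνeq using hν
  let Mn : ℕ → Finset (Sym2 V) × V × V → ℝ := fun n i =>
    ((φ n : ℝ) + 1)⁻¹ * (cnt (u n ++ [v₁]) i : ℝ)
  have hsum : ∀ n, ∑ i, (cnt (u n ++ [v₁]) i : ℝ) = φ n := by
    intro n
    have := cnt_sum (u n ++ [v₁])
    rw [List.length_append, hlen] at this
    simp only [List.length_cons, List.length_nil, zero_add, add_tsub_cancel_right] at this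
    exact_mod_cast this
  have hbox : ∀ n, Mn n ∈ (Set.univ.pi fun _ : Finset (Sym2 V) × V × V => Set.Icc (0 : ℝ) 1) := by
    intro n i _
    refine ⟨by simp only [Mn]; positivity, ?_⟩
    have h2 : (cnt (u n ++ [v₁]) i : ℝ) ≤ ∑ i, (cnt (u n ++ [v₁]) i : ℝ) :=
      Finset.single_le_sum (f := fun i => (cnt (u n ++ [v₁]) i : ℝ))
        (fun _ _ => Nat.cast_nonneg _) (Finset.mem_univ i)
    rw [hsum] at h2
    simp only [Mn]
    rw [inv_mul_le_iff₀ (by positivity)]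
    linarith
  obtain ⟨M, -, ψ, hψ, hM⟩ := (isCompact_univ_pi fun _ => isCompact_Icc).tendsto_subseq hbox
  have hMi : ∀ i, Tendsto (fun n => Mn (ψ n) i) atTop (𝓝 (M i)) := fun i =>
    (tendsto_pi_nhds.1 hM) i
  have hinv : Tendsto (fun n => ((φ (ψ n) : ℝ) + 1)⁻¹) atTop (𝓝 0) := by
    have h1 : Tendsto (fun n : ℕ => ((n : ℝ) + 1)⁻¹) atTop (𝓝 0) := by
      simpa [one_div] using tendsto_one_div_add_atTop_nhds_zero_nat (𝕜 := ℝ)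
    exact h1.comp ((hφ.comp hψ).tendsto_atTop)
  have hM0 : ∀ i, 0 ≤ M i := fun i => ge_of_tendsto' (hMi i) fun n => (hbox (ψ n) i trivial).1
  have hMs : ∀ F x y, s(x, y) ∉ F → M (F, x, y) = 0 := by
    intro F x y hF
    refine le_antisymm (le_of_tendsto_of_tendsto' (hMi _) hinv fun n => ?_) (hM0 _)
    simp only [Mn]
    refine mul_le_of_le_one_right (by positivity) ?_
    exact_mod_cast cnt_new G v₁ _ (hgood (ψ n)) F x y hF
  have hMb : ∀ F a, ∑ y, M (F, a, y) = ∑ y, M (F, y, a) := by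
    intro F a
    have h1 : Tendsto (fun n => (∑ y, Mn (ψ n) (F, a, y)) - ∑ y, Mn (ψ n) (F, y, a)) atTop
        (𝓝 ((∑ y, M (F, a, y)) - ∑ y, M (F, y, a))) :=
      (tendsto_finsetSum _ fun y _ => hMi _).sub (tendsto_finsetSum _ fun y _ => hMi _)
    have h2 : Tendsto (fun n => (∑ y, Mn (ψ n) (F, a, y)) - ∑ y, Mn (ψ n) (F, y, a)) atTop
        (𝓝 0) := by
      refine squeeze_zero_norm (fun n => ?_) hinv
      have h3 := Dv_bound G v₁ _ (hgood (ψ n)) F a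
      have h4 : (∑ y, Mn (ψ n) (F, a, y)) - ∑ y, Mn (ψ n) (F, y, a) =
          ((φ (ψ n) : ℝ) + 1)⁻¹ * Dv (u (ψ n) ++ [v₁]) F a := by
        simp only [Mn, Dv]
        rw [← Finset.mul_sum, ← Finset.mul_sum]
        push_cast
        ring
      rw [h4, Real.norm_eq_abs, abs_mul, abs_of_nonneg (by positivity)]
      exact mul_le_of_le_one_right (by positivity) h3
    have := tendsto_nhds_unique h1 h2
    linarith
  have hMt : ∑ i, M i = 1 := by
    have h1 : Tendsto (fun n => ∑ i, Mn (ψ n) i) atTop (𝓝 (∑ i, M i)) :=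
      tendsto_finsetSum _ fun y _ => hMi _
    have h2 : Tendsto (fun n => ∑ i, Mn (ψ n) i) atTop (𝓝 (1 - 0)) := by
      refine (tendsto_const_nhds.sub hinv).congr fun n => ?_
      simp only [Mn]
      rw [← Finset.mul_sum, hsum]
      have : (φ (ψ n) : ℝ) + 1 ≠ 0 := by positivity
      field_simp
      ring
    rw [tendsto_nhds_unique h1 h2, sub_zero]
  have hMm : ∀ a, Tendsto (fun n => (νn (ψ n)).1 a) atTop (𝓝 (∑ F, ∑ x, M (F, x, a))) := by
    intro a
    have h1 : Tendsto (fun n => (∑ F, ∑ x, Mn (ψ n) (F, x, a)) +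
        ((φ (ψ n) : ℝ) + 1)⁻¹ * if v₁ = a then 1 else 0) atTop
        (𝓝 ((∑ F, ∑ x, M (F, x, a)) + 0 * if v₁ = a then 1 else 0)) :=
      (tendsto_finsetSum _ fun F _ => tendsto_finsetSum _ fun y _ => hMi _).add (hinv.mul_const _)
    rw [zero_mul, add_zero] at h1
    refine h1.congr fun n => ?_
    rw [hνeq, cnt_count G v₁ _ (hgood (ψ n)) a]
    simp only [Mn, ← Finset.mul_sum]
    push_cast
    rw [div_eq_inv_mul]
    ring
  have hswap : ∀ a, ∑ F, ∑ x, M (F, x, a) = ∑ F, ∑ y, M (F, a, y) := fun a =>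
    Finset.sum_congr rfl fun F _ => (hMb F a).symm
  have htot : ∑ F, ∑ x, ∑ y, M (F, x, y) = 1 := by
    rw [← hMt, Fintype.sum_prod_type]
    refine Finset.sum_congr rfl fun F _ => ?_
    rw [Fintype.sum_prod_type]
  let ν : ProbMeas V := ⟨fun a => ∑ F, ∑ y, M (F, a, y), fun a =>
    Finset.sum_nonneg fun F _ => Finset.sum_nonneg fun y _ => hM0 _, by
      rw [Finset.sum_comm]; exact htot⟩
  have hνC' : ν ∈ C := by
    refine hC.mem_of_tendsto (f := fun n => νn (ψ n)) (b := atTop) ?_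
      (Eventually.of_forall fun n => hνC _)
    rw [tendsto_subtype_rng, tendsto_pi_nhds]
    intro a
    have := hMm a
    rw [hswap] at this
    exact this
  have hseq : ∃ Es ∈ seqE G v₁, ∀ F x y, F ≠ ∅ → (∀ k, F ≠ Es k) → M (F, x, y) = 0 := by
    have hcl : IsClosed (⋃ Es ∈ seqE G v₁, {M : Finset (Sym2 V) × V × V → ℝ |
        ∀ F x y, F ≠ ∅ → (∀ k, F ≠ Es k) → M (F, x, y) = 0}) := by
      refine (Set.toFinite _).isClosed_biUnion fun Es _ => ?_
      simp only [Set.setOf_forall]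
      exact isClosed_iInter fun F => isClosed_iInter fun x => isClosed_iInter fun y =>
        isClosed_iInter fun _ => isClosed_iInter fun _ => isClosed_eq (by fun_prop) (by fun_prop)
    have := hcl.mem_of_tendsto hM (Eventually.of_forall fun n => ?_)
    · simpa only [Set.mem_iUnion, Set.mem_setOf_eq, exists_prop] using this
    · obtain ⟨Es, hEs, h⟩ := good_seq G hG hV v₁ _ (hgood (ψ n))
      simp only [Set.mem_iUnion, Set.mem_setOf_eq, exists_prop]
      refine ⟨Es, hEs, fun F x y hF hk => ?_⟩
      have : cnt (u (ψ n) ++ [v₁]) (F, x, y) = 0 := by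
        by_contra h'
        obtain ⟨k, hk'⟩ := h F x y hF h'
        exact hk k hk'
      simp [Mn, this]
  obtain ⟨Es, hEs, hEs0⟩ := hseq
  have hinj : Function.Injective Es := by
    intro i j hij
    have h1 := hEs.2.1 i
    rw [hij, hEs.2.1 j] at h1
    exact Fin.ext (by omega)
  have hM00 : ∀ F, F ∉ Set.range Es → ∀ x y, M (F, x, y) = 0 := by
    intro F hF x y
    by_cases hF0 : F = ∅
    · subst hF0
      exact hMs _ _ _ (by simp)
    · exact hEs0 F x y hF0 (fun k hk => hF ⟨k, hk.symm⟩)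
  have hred : ∀ f : Finset (Sym2 V) → ℝ, (∀ F, F ∉ Set.range Es → f F = 0) →
      ∑ k, f (Es k) = ∑ F, f F := fun f hf =>
    Fintype.sum_of_injective Es hinj _ _ hf (fun _ => rfl)
  have hA := lemA G hδ hEs (M := fun k x y => M (Es k, x, y)) ⟨fun _ _ _ => hM0 _,
    fun k x y h => hMs _ _ _ h, fun k a => hMb _ _, by
      rw [hred (fun F => ∑ x, ∑ y, M (F, x, y)), htot]
      intro F hF
      simp [hM00 F hF]⟩ ν (fun x => by
      rw [hred (fun F => ∑ y, M (F, x, y))]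
      intro F hF
      simp [hM00 F hF])
  have hPhi : PhiK G δ Es (fun k x y => M (Es k, x, y)) = PhiA (phat G δ) M := by
    unfold PhiK PhiA
    rw [hred (fun F => phiF (phat G δ F) (fun x y => M (F, x, y)))]
    intro F hF
    simp [hM00 F hF, phiF]
  have hle : PhiA (phat G δ) M ≤ α := by
    refine le_of_tendsto' (((PhiA_cont (phat G δ)).tendsto M).comp hM) fun n => ?_
    exact (hlt (ψ n)).le
  rw [hPhi] at hA
  exact absurd (hα ν hνC') (not_lt.2 (hA.trans (EReal.coe_le_coe_iff.2 hle)))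

theorem elog_le {p c s : ℝ} (hs : 0 < s) (h : p ≤ Real.exp (s * c)) :
    ((s⁻¹ : ℝ) : EReal) * elog p ≤ (c : EReal) := by
  unfold elog
  split_ifs with hp
  · rw [EReal.coe_mul_bot_of_pos (inv_pos.2 hs)]
    exact bot_le
  · rw [← EReal.coe_mul, EReal.coe_le_coe_iff, inv_mul_le_iff₀ hs]
    exact (Real.log_le_iff_le_exp (not_le.1 hp)).2 h

theorem le_elog {p c s : ℝ} (hs : 0 < s) (h : Real.exp (s * c) ≤ p) :
    (c : EReal) ≤ ((s⁻¹ : ℝ) : EReal) * elog p := by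
  unfold elog
  have hp : 0 < p := (Real.exp_pos _).trans_le h
  rw [if_neg (not_le.2 hp), ← EReal.coe_mul, EReal.coe_le_coe_iff, le_inv_mul_iff₀ hs]
  exact (Real.le_log_iff_exp_le hp).2 h

theorem upper_bound (G : SimpleGraph V) [DecidableRel G.Adj] (hG : G.Connected)
    (hV : 3 ≤ Fintype.card V) (v₁ : V) {δ : ℝ} (hδ : 0 < δ) (C : Set (ProbMeas V)) (hC : IsClosed C) :
      Filter.limsup
          (fun n : ℕ => ((((n : ℝ) + 1)⁻¹ : ℝ) : EReal) * elog (probEmp G δ v₁ n C)) atTop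
        ≤ -sInf (Ifun G v₁ δ '' C) := by
  rw [EReal.le_neg]
  refine EReal.ge_of_forall_gt_iff_ge.1 fun α hα => ?_
  rw [EReal.le_neg]
  have h1 := type_lb G hG hV v₁ hδ C hC α (fun ν hν => hα.trans_le (sInf_le ⟨ν, hν, rfl⟩))
  set K := Fintype.card (Finset (Sym2 V) × V × V)
  have h2 : ∀ᶠ n : ℕ in atTop, ((((n : ℝ) + 1)⁻¹ : ℝ) : EReal) * elog (probEmp G δ v₁ n C) ≤
      ((K * (Real.log ((n : ℝ) + 1) / ((n : ℝ) + 1)) - α : ℝ) : EReal) := by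
    filter_upwards [h1] with n hn
    have hnp : (0 : ℝ) < (n : ℝ) + 1 := by positivity
    refine elog_le hnp ?_
    rw [probEmp_eq]
    refine (Ex_types G hδ v₁ n _ (((n : ℝ) + 1) * α) ?_).trans (le_of_eq ?_)
    · intro u hu hg hS
      have h3 := hn u hu hg hS
      rw [PhiA_smul _ _ (fun _ => Nat.cast_nonneg _) (inv_pos.2 hnp), le_inv_mul_iff₀ hnp] at h3
      exact h3
    · rw [← Real.exp_log (pow_pos hnp K), ← Real.exp_add, Real.log_pow]
      congr 1
      field_simp
      ring
  have h3 : Tendsto (fun n : ℕ => ((K * (Real.log ((n : ℝ) + 1) / ((n : ℝ) + 1)) - α : ℝ) : EReal))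
      atTop (𝓝 ((K * 0 - α : ℝ) : EReal)) := by
    refine (continuous_coe_real_ereal.tendsto _).comp ?_
    refine Tendsto.sub_const (Tendsto.const_mul _ ?_) _
    have h4 : Tendsto (fun x : ℝ => Real.log x / x) atTop (𝓝 0) :=
      Real.isLittleO_log_id_atTop.tendsto_div_nhds_zero
    exact h4.comp (tendsto_atTop_add_const_right _ _ tendsto_natCast_atTop_atTop)
  refine (limsup_le_limsup h2).trans ?_
  rw [h3.limsup_eq]
  simp

def uM (G : SimpleGraph V) [DecidableRel G.Adj] (Es : Fin G.edgeFinset.card → Finset (Sym2 V))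
    (k : Fin G.edgeFinset.card) (x y : V) : ℝ :=
  ((G.edgeFinset.card : ℝ)⁻¹ * (∑ x, ∑ y, uu (Es k) x y)⁻¹) * uu (Es k) x y

theorem edge_card_pos (G : SimpleGraph V) [DecidableRel G.Adj] (hG : G.Connected)
    (hV : 3 ≤ Fintype.card V) (v₁ : V) : 0 < G.edgeFinset.card := by
  obtain ⟨w, hw⟩ := exists_nbr G hG hV v₁
  exact Finset.card_pos.2 ⟨s(v₁, w), by simpa using hw⟩

theorem uM_mem (G : SimpleGraph V) [DecidableRel G.Adj] (hG : G.Connected)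
    (hV : 3 ≤ Fintype.card V) (v₁ : V) {Es : Fin G.edgeFinset.card → Finset (Sym2 V)}
    (hE : Es ∈ seqE G v₁) : uM G Es ∈ KK G Es ∧ ∀ k x y, s(x, y) ∈ Es k → 0 < uM G Es k x y := by
  have hb := edge_card_pos G hG hV v₁
  have hb' : (0 : ℝ) < G.edgeFinset.card := by exact_mod_cast hb
  have ht := fun k => uu_tot_pos (seqE_ne hE k)
  have hc : ∀ k, 0 < (G.edgeFinset.card : ℝ)⁻¹ * (∑ x, ∑ y, uu (Es k) x y)⁻¹ := fun k =>
    mul_pos (inv_pos.2 hb') (inv_pos.2 (ht k))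
  refine ⟨⟨fun k x y => mul_nonneg (hc k).le (uu_nonneg _ _ _), fun k x y h => ?_, fun k a => ?_, ?_⟩,
    fun k x y h => mul_pos (hc k) (by simp [uu, h])⟩
  · simp [uM, uu, h]
  · simp only [uM, ← Finset.mul_sum, uu_bal (Es k) a]
  · have : ∀ k, ∑ x, ∑ y, uM G Es k x y = (G.edgeFinset.card : ℝ)⁻¹ := by
      intro k
      simp only [uM, ← Finset.mul_sum]
      rw [mul_assoc, inv_mul_cancel₀ (ht k).ne', mul_one]
    simp only [this]
    simp [hb.ne']

theorem KK_marg {G : SimpleGraph V} [DecidableRel G.Adj] {Es : Fin G.edgeFinset.card → Finset (Sym2 V)}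
    {M : Fin G.edgeFinset.card → V → V → ℝ} (hM : M ∈ KK G Es) :
    ∃ ν : ProbMeas V, ∀ x, ∑ k, ∑ y, M k x y = ν.1 x :=
  ⟨⟨fun x => ∑ k, ∑ y, M k x y, fun x => Finset.sum_nonneg fun k _ => Finset.sum_nonneg fun y _ =>
    hM.1 k x y, by rw [Finset.sum_comm]; exact hM.2.2.2⟩, fun x => rfl⟩

theorem Ifun_fin (G : SimpleGraph V) [DecidableRel G.Adj] (hG : G.Connected)
    (hV : 3 ≤ Fintype.card V) (v₁ : V) {δ : ℝ} (hδ : 0 < δ) :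
    ∃ ν : ProbMeas V, Ifun G v₁ δ ν < ⊤ := by
  obtain ⟨Es, hE⟩ := exists_seq G hG hV v₁
  obtain ⟨ν, hν⟩ := KK_marg (uM_mem G hG hV v₁ hE).1
  exact ⟨ν, (lemA G hδ hE (uM_mem G hG hV v₁ hE).1 ν hν).trans_lt (EReal.coe_lt_top _)⟩

end Upper

section Phase

variable {V : Type} [Fintype V] [DecidableEq V]

structure Phase (F : Finset (Sym2 V)) (m : V → V → ℝ) : Prop where
  ne : F.Nonempty
  pos : ∀ x y, s(x, y) ∈ F → 0 < m x y
  zero : ∀ x y, s(x, y) ∉ F → m x y = 0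
  bal : ∀ a, ∑ y, m a y = ∑ y, m y a
  conn : ∀ h : V → ℝ, (∀ x y, s(x, y) ∈ F → h x = h y) →
    ∀ x y, memVerts F x → memVerts F y → h x = h y

theorem Phase.nonneg {F : Finset (Sym2 V)} {m : V → V → ℝ} (P : Phase F m) (x y : V) :
    0 ≤ m x y := by
  by_cases h : s(x, y) ∈ F
  · exact (P.pos x y h).le
  · exact (P.zero x y h).ge

theorem Phase.row_pos {F : Finset (Sym2 V)} {m : V → V → ℝ} (P : Phase F m) {x : V}
    (hx : memVerts F x) : 0 < ∑ y, m x y := by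
  obtain ⟨y, hy⟩ := (memVerts_iff F x).1 hx
  exact Finset.sum_pos' (fun z _ => P.nonneg x z) ⟨y, Finset.mem_univ _, P.pos x y hy⟩

theorem Phase.row_nonneg {F : Finset (Sym2 V)} {m : V → V → ℝ} (P : Phase F m) (x : V) :
    0 ≤ ∑ y, m x y := Finset.sum_nonneg fun y _ => P.nonneg x y

theorem Phase.zero' {F : Finset (Sym2 V)} {m : V → V → ℝ} (P : Phase F m) {x : V}
    (hx : ¬ memVerts F x) (y : V) : m x y = 0 :=
  P.zero x y fun h => hx ((memVerts_iff F x).2 ⟨y, h⟩)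

theorem Phase.tot_pos {F : Finset (Sym2 V)} {m : V → V → ℝ} (P : Phase F m) :
    0 < ∑ x, ∑ y, m x y := by
  obtain ⟨e, he⟩ := P.ne
  induction e with | _ a b =>
  exact Finset.sum_pos' (fun z _ => P.row_nonneg z)
    ⟨a, Finset.mem_univ _, P.row_pos ((memVerts_iff F a).2 ⟨b, he⟩)⟩

theorem Phase.lap_sum {F : Finset (Sym2 V)} {m : V → V → ℝ} (P : Phase F m) (h : V → ℝ) :
    ∑ x, ∑ y, m x y * (h x - h y) = 0 := by
  have h1 : ∑ x, ∑ y, m x y * h y = ∑ x, ∑ y, m x y * h x := by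
    rw [Finset.sum_comm]
    refine Finset.sum_congr rfl fun y _ => ?_
    rw [← Finset.sum_mul, ← Finset.sum_mul, P.bal y]
  simp only [mul_sub, Finset.sum_sub_distrib]
  rw [h1, sub_self]

def lapT (F : Finset (Sym2 V)) (m : V → V → ℝ) : (V → ℝ) →ₗ[ℝ] (V → ℝ) where
  toFun h x := (∑ y, m x y * (h x - h y)) + (∑ z, (∑ y, m z y) * h z) * (∑ y, m x y) +
    (if memVerts F x then 0 else h x)
  map_add' h h' := by
    funext x
    simp only [Pi.add_apply]
    have h1 : ∑ y, m x y * (h x + h' x - (h y + h' y)) =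
        (∑ y, m x y * (h x - h y)) + ∑ y, m x y * (h' x - h' y) := by
      rw [← Finset.sum_add_distrib]; exact Finset.sum_congr rfl fun y _ => by ring
    have h2 : ∑ z, (∑ y, m z y) * (h z + h' z) =
        (∑ z, (∑ y, m z y) * h z) + ∑ z, (∑ y, m z y) * h' z := by
      rw [← Finset.sum_add_distrib]; exact Finset.sum_congr rfl fun y _ => by ring
    rw [h1, h2]
    split_ifs <;> ring
  map_smul' c h := by
    funext x
    simp only [Pi.smul_apply, smul_eq_mul, RingHom.id_apply]
    have h1 : ∑ y, m x y * (c * h x - c * h y) = c * ∑ y, m x y * (h x - h y) := by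
      rw [Finset.mul_sum]; exact Finset.sum_congr rfl fun y _ => by ring
    have h2 : ∑ z, (∑ y, m z y) * (c * h z) = c * ∑ z, (∑ y, m z y) * h z := by
      rw [Finset.mul_sum]; exact Finset.sum_congr rfl fun y _ => by ring
    rw [h1, h2]
    split_ifs <;> ring

theorem Phase.lap_solve {F : Finset (Sym2 V)} {m : V → V → ℝ} (P : Phase F m) (h b : V → ℝ)
    (hb : ∀ x, ¬ memVerts F x → b x = 0) (hb0 : ∑ x, b x = 0) (hT : lapT F m h = b) :
    (∀ x, ¬ memVerts F x → h x = 0) ∧ (∑ z, (∑ y, m z y) * h z = 0) ∧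
      ∀ x, ∑ y, m x y * (h x - h y) = b x := by
  have hx : ∀ x, (∑ y, m x y * (h x - h y)) + (∑ z, (∑ y, m z y) * h z) * (∑ y, m x y) +
    (if memVerts F x then 0 else h x) = b x := fun x => congrFun hT x
  have h1 : ∀ x, ¬ memVerts F x → h x = 0 := by
    intro x hx'
    have := hx x
    simp only [P.zero' hx', if_neg hx', hb x hx'] at this
    simpa using this
  have h2 : ∀ x, (∑ y, m x y * (h x - h y)) + (∑ z, (∑ y, m z y) * h z) * (∑ y, m x y) = b x := by
    intro x
    rw [← hx x]
    split_ifs with h'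
    · ring
    · rw [h1 x h']; ring
  have h3 : ∑ z, (∑ y, m z y) * h z = 0 := by
    have h4 := Finset.sum_congr (rfl : (Finset.univ : Finset V) = Finset.univ) fun x _ => h2 x
    rw [Finset.sum_add_distrib, P.lap_sum, hb0, ← Finset.mul_sum, zero_add] at h4
    exact (mul_eq_zero.1 h4).resolve_right P.tot_pos.ne'
  refine ⟨h1, h3, fun x => ?_⟩
  have := h2 x
  rw [h3] at this
  simpa using this

theorem Phase.lap_inj {F : Finset (Sym2 V)} {m : V → V → ℝ} (P : Phase F m) :
    Function.Injective (lapT F m) := by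
  rw [← LinearMap.ker_eq_bot, LinearMap.ker_eq_bot']
  intro h hT
  obtain ⟨h1, h2, h3⟩ := P.lap_solve h 0 (fun _ _ => rfl) (by simp) hT
  have h4 : ∑ x, ∑ y, m x y * (h x - h y) ^ 2 = 0 := by
    have e1 : ∑ x, ∑ y, m x y * (h x - h y) ^ 2 =
        2 * (∑ x, h x * ∑ y, m x y * (h x - h y)) - ∑ x, ∑ y, m x y * (h x ^ 2 - h y ^ 2) := by
      rw [Finset.mul_sum, ← Finset.sum_sub_distrib]
      refine Finset.sum_congr rfl fun x _ => ?_
      rw [Finset.mul_sum, Finset.mul_sum, ← Finset.sum_sub_distrib]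
      exact Finset.sum_congr rfl fun y _ => by ring
    rw [e1, P.lap_sum (fun x => h x ^ 2)]
    simp [h3]
  have h5 : ∀ x y, s(x, y) ∈ F → h x = h y := by
    intro x y hxy
    have h6 := (Finset.sum_eq_zero_iff_of_nonneg fun x _ => Finset.sum_nonneg fun y _ =>
      mul_nonneg (P.nonneg x y) (sq_nonneg _)).1 h4 x (Finset.mem_univ _)
    have h7 := (Finset.sum_eq_zero_iff_of_nonneg fun y _ =>
      mul_nonneg (P.nonneg x y) (sq_nonneg _)).1 h6 y (Finset.mem_univ _)
    have h8 := (mul_eq_zero.1 h7).resolve_left (P.pos x y hxy).ne'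
    have := pow_eq_zero_iff (two_ne_zero) |>.1 h8
    linarith
  funext x
  by_cases hx : memVerts F x
  swap
  · exact h1 x hx
  have h9 : (∑ z, ∑ y, m z y) * h x = 0 := by
    rw [← h2, Finset.sum_mul]
    refine Finset.sum_congr rfl fun z _ => ?_
    by_cases hz : memVerts F z
    · rw [P.conn h h5 x z hx hz]
    · rw [Finset.sum_eq_zero fun y _ => P.zero' hz y]; ring
  exact (mul_eq_zero.1 h9).resolve_left P.tot_pos.ne'

theorem Phase.poisson {F : Finset (Sym2 V)} {m : V → V → ℝ} (P : Phase F m) (g : V → V → ℝ) :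
    ∃ h : V → ℝ, ∀ x, ∑ y, m x y *
      (g x y + h y - h x - (∑ x, ∑ y, m x y * g x y) / ∑ x, ∑ y, m x y) = 0 := by
  set c := (∑ x, ∑ y, m x y * g x y) / ∑ x, ∑ y, m x y with hc
  have hsurj := LinearMap.injective_iff_surjective.1 P.lap_inj
  obtain ⟨h, hh⟩ := hsurj (fun x => ∑ y, m x y * (g x y - c))
  obtain ⟨-, -, h3⟩ := P.lap_solve h _ (fun x hx => by
    simp [P.zero' hx]) (by
    simp only [mul_sub, Finset.sum_sub_distrib, ← Finset.sum_mul]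
    rw [hc, mul_div_cancel₀ _ P.tot_pos.ne', sub_self]) hh
  refine ⟨h, fun x => ?_⟩
  have := h3 x
  rw [← sub_eq_zero, ← Finset.sum_sub_distrib] at this
  rw [← neg_eq_zero, ← Finset.sum_neg_distrib, ← this]
  exact Finset.sum_congr rfl fun y _ => by ring

def qm (m : V → V → ℝ) (_ : Finset (Sym2 V)) (x y : V) : ℝ := m x y / ∑ z, m x z

theorem Phase.q_nonneg {F : Finset (Sym2 V)} {m : V → V → ℝ} (P : Phase F m) (F' : Finset (Sym2 V))
    (x y : V) : 0 ≤ qm m F' x y := div_nonneg (P.nonneg x y) (P.row_nonneg x)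

theorem Phase.q_sum {F : Finset (Sym2 V)} {m : V → V → ℝ} (P : Phase F m) (F' : Finset (Sym2 V))
    {x : V} (hx : memVerts F x) : ∑ y, qm m F' x y = 1 := by
  unfold qm
  rw [← Finset.sum_div, div_self (P.row_pos hx).ne']

theorem Phase.q_zero {F : Finset (Sym2 V)} {m : V → V → ℝ} (P : Phase F m) (F' : Finset (Sym2 V))
    {x y : V} (h : s(x, y) ∉ F) : qm m F' x y = 0 := by simp [qm, P.zero x y h]

theorem memVerts_right {F : Finset (Sym2 V)} {x y : V} (h : s(x, y) ∈ F) : memVerts F y :=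
  ⟨_, h, by simp⟩

theorem Phase.Ex_one {F : Finset (Sym2 V)} {m : V → V → ℝ} (P : Phase F m) (n : ℕ) :
    ∀ x t, memVerts F x → Ex (qm m) n (fun _ => 1) (x :: t) = 1 := by
  induction n with
  | zero => intro x t _; rfl
  | succ n ih =>
    intro x t hx
    refine Eq.trans ?_ (P.q_sum (pathEdges (x :: t)) hx)
    rw [Ex]
    refine Finset.sum_congr rfl fun y _ => ?_
    by_cases h : s(x, y) ∈ F
    · rw [ih y _ (memVerts_right h), mul_one]; rfl
    · simp [stp, P.q_zero _ h]

theorem Phase.second {F : Finset (Sym2 V)} {m : V → V → ℝ} (P : Phase F m) (gt : V → V → ℝ) (B : ℝ)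
    (hB : ∀ x y, gt x y ^ 2 ≤ B) (h0 : ∀ x, ∑ y, m x y * gt x y = 0) (Z : List V → ℝ)
    (hZ : ∀ y x t, Z (y :: x :: t) = Z (x :: t) + gt x y) (n : ℕ) :
    ∀ x t, memVerts F x → Ex (qm m) n (fun l => Z l ^ 2) (x :: t) ≤ Z (x :: t) ^ 2 + n * B := by
  induction n with
  | zero => intro x t _; simp [Ex]
  | succ n ih =>
    intro x t hx
    rw [Ex]
    have hq0 : ∑ y, qm m (pathEdges (x :: t)) x y * gt x y = 0 := by
      have := h0 x
      simp only [qm, div_mul_eq_mul_div]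
      rw [← Finset.sum_div, this, zero_div]
    have hq1 := P.q_sum (pathEdges (x :: t)) hx
    calc _ ≤ ∑ y, qm m (pathEdges (x :: t)) x y * (Z (x :: t) ^ 2 + 2 * Z (x :: t) * gt x y + B + n * B) := by
          refine Finset.sum_le_sum fun y _ => ?_
          by_cases h : s(x, y) ∈ F
          · refine mul_le_mul_of_nonneg_left ?_ (P.q_nonneg (pathEdges (x :: t)) x y)
            refine (ih y _ (memVerts_right h)).trans ?_
            rw [hZ]
            nlinarith [hB x y]
          · simp [stp, P.q_zero _ h]
      _ = (Z (x :: t) ^ 2 + B + n * B) * (∑ y, qm m (pathEdges (x :: t)) x y) +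
          2 * Z (x :: t) * ∑ y, qm m (pathEdges (x :: t)) x y * gt x y := by
          rw [Finset.mul_sum, Finset.mul_sum, ← Finset.sum_add_distrib]
          exact Finset.sum_congr rfl fun y _ => by ring
      _ = _ := by rw [hq0, hq1]; push_cast; ring

def addF (g : V → V → ℝ) : List V → ℝ
  | [] => 0
  | [_] => 0
  | y :: x :: t => addF g (x :: t) + g x y

def hdF (h : V → ℝ) : List V → ℝ
  | [] => 0
  | x :: _ => h x

theorem ev_ge {c : ℝ} (hc : 0 < c) (d : ℝ) : ∀ᶠ n : ℕ in atTop, d ≤ c * n :=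
  (tendsto_natCast_atTop_atTop.const_mul_atTop hc).eventually_ge_atTop d

theorem Phase.lln {F : Finset (Sym2 V)} {m : V → V → ℝ} (P : Phase F m) (g : V → V → ℝ)
    {ε η : ℝ} (hε : 0 < ε) (hη : 0 < η) :
    ∀ᶠ n : ℕ in atTop, ∀ x t, memVerts F x →
      Ex (qm m) n (fun l => if |addF g l - addF g (x :: t) -
        n * ((∑ x, ∑ y, m x y * g x y) / ∑ x, ∑ y, m x y)| ≤ ε * n then 0 else 1) (x :: t) ≤ η := by
  set c := (∑ x, ∑ y, m x y * g x y) / ∑ x, ∑ y, m x y with hc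
  obtain ⟨h, hh⟩ := P.poisson g
  rw [← hc] at hh
  set gt : V → V → ℝ := fun x y => g x y + h y - h x - c with hgt
  set B := ∑ x, ∑ y, gt x y ^ 2 with hB
  have hBb : ∀ x y, gt x y ^ 2 ≤ B := fun x y =>
    (Finset.single_le_sum (f := fun y => gt x y ^ 2) (fun z _ => sq_nonneg _) (Finset.mem_univ y)).trans
      (Finset.single_le_sum (f := fun x => ∑ y, gt x y ^ 2)
        (fun z _ => Finset.sum_nonneg fun w _ => sq_nonneg _) (Finset.mem_univ x))
  set Hb := ∑ x, |h x| with hHb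
  have hHbb : ∀ x, |h x| ≤ Hb := fun x =>
    Finset.single_le_sum (f := fun x => |h x|) (fun z _ => abs_nonneg _) (Finset.mem_univ x)
  filter_upwards [ev_ge (half_pos hε) (2 * Hb), ev_ge (mul_pos hη (pow_pos (half_pos hε) 2)) B,
    eventually_gt_atTop 0] with n hn1 hn2 hn0 x t hx
  have hn0' : (0 : ℝ) < n := by exact_mod_cast hn0
  let Z : List V → ℝ := fun l => addF g l - addF g (x :: t) - c * ((l.length : ℝ) - (x :: t).length)
    + hdF h l - h x
  have hZ : ∀ y x t, Z (y :: x :: t) = Z (x :: t) + gt x y := by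
    intro y x' t'
    simp only [Z, addF, hdF, hgt, List.length_cons]
    push_cast
    ring
  have h2 := P.second gt B hBb hh Z hZ n x t hx
  have hZ0 : Z (x :: t) = 0 := by simp [Z, hdF]
  rw [hZ0] at h2
  set r : ℝ := ((ε / 2 * n) ^ 2)⁻¹ with hr
  have hr0 : 0 < r := by positivity
  calc _ ≤ Ex (qm m) n (fun l => r * Z l ^ 2) (x :: t) := by
        refine Ex_mono _ (P.q_nonneg) n _ fun u hu => ?_
        split_ifs with hif
        · positivity
        · rw [hr, ← div_eq_inv_mul, le_div_iff₀ (by positivity), one_mul]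
          rw [← sq_abs (Z _)]
          refine pow_le_pow_left₀ (by positivity) ?_ 2
          have hlen : (((u ++ x :: t).length : ℝ) - (x :: t).length) = n := by
            rw [List.length_append, hu]; push_cast; ring
          have hhd : |hdF h (u ++ x :: t)| ≤ Hb := by
            cases u with
            | nil => exact hHbb x
            | cons y u => exact hHbb y
          have hx' := hHbb x
          rw [not_le] at hif
          simp only [Z]
          rw [hlen]
          have := abs_sub_abs_le_abs_sub (addF g (u ++ x :: t) - addF g (x :: t) - n * c)
            (h x - hdF h (u ++ x :: t))
          have h3 := abs_sub (h x) (hdF h (u ++ x :: t))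
          have h4 : addF g (u ++ x :: t) - addF g (x :: t) - c * n + hdF h (u ++ x :: t) - h x =
            addF g (u ++ x :: t) - addF g (x :: t) - n * c - (h x - hdF h (u ++ x :: t)) := by ring
          rw [h4]
          linarith
    _ = r * Ex (qm m) n (fun l => Z l ^ 2) (x :: t) := Ex_smul _ _ _ _ _
    _ ≤ r * (n * B) := by
        refine mul_le_mul_of_nonneg_left ?_ hr0.le
        linarith
    _ ≤ η := by
        rw [hr, ← div_eq_inv_mul, div_le_iff₀ (by positivity)]
        nlinarith

theorem count_addF (a : V) (u : List V) (x : V) (t : List V) :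
    ((u ++ x :: t).count a : ℝ) - (x :: t).count a =
      addF (fun _ y => if y = a then 1 else 0) (u ++ x :: t) -
      addF (fun _ y => if y = a then 1 else 0) (x :: t) := by
  induction u with
  | nil => simp
  | cons y u ih =>
    rw [List.cons_append, List.count_cons]
    have : addF (fun _ y => if y = a then 1 else 0) (y :: (u ++ x :: t)) =
      addF (fun _ y => if y = a then 1 else 0) (u ++ x :: t) + if y = a then 1 else 0 := by
      cases u <;> rfl
    rw [this]
    push_cast
    simp only [beq_iff_eq]
    split_ifs <;> push_cast <;> linarith

theorem Phase.compare (G : SimpleGraph V) [DecidableRel G.Adj] {δ : ℝ} (hδ : 0 < δ)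
    {F : Finset (Sym2 V)} {m : V → V → ℝ} (P : Phase F m) (hF : F ⊆ G.edgeFinset)
    (φ : List V → ℝ) (hφ : ∀ l, 0 ≤ φ l) (w : V → V → ℝ)
    (hw : ∀ x y, s(x, y) ∈ F → w x y = Real.log (m x y / (∑ z, m x z) / phat G δ F x y)) (n : ℕ) :
    ∀ x t, pathEdges (x :: t) = F →
    Ex (qm m) n (fun l => φ l * Real.exp (-(addF w l - addF w (x :: t)))) (x :: t) ≤
      Ex (phat G δ) n (fun l => φ l * if pathEdges l = F then 1 else 0) (x :: t) := by
  induction n with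
  | zero => intro x t h; simp [Ex, h]
  | succ n ih =>
    intro x t hxt
    rw [Ex, Ex]
    refine Finset.sum_le_sum fun y _ => ?_
    have hR : 0 ≤ Ex (phat G δ) n (fun l => φ l * if pathEdges l = F then 1 else 0) (y :: x :: t) :=
      Ex_nonneg _ (phat_nonneg G hδ) n _ fun u => mul_nonneg (hφ _) (by split_ifs <;> simp)
    by_cases h : s(x, y) ∈ F
    swap
    · simp only [stp, P.q_zero _ h, zero_mul]
      exact mul_nonneg (phat_nonneg G hδ _ _ _) hR
    have hpe : pathEdges (y :: x :: t) = F := by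
      rw [pathEdges, hxt, Finset.insert_eq_self, Sym2.eq_swap]
      exact h
    have hadj := hF h
    rw [SimpleGraph.mem_edgeFinset, SimpleGraph.mem_edgeSet] at hadj
    have hp := phat_pos G hδ F hadj
    have hm := P.pos x y h
    have hrow := P.row_pos ((memVerts_iff F x).2 ⟨y, h⟩)
    have e1 : Ex (qm m) n (fun l => φ l * Real.exp (-(addF w l - addF w (x :: t)))) (y :: x :: t) =
        Real.exp (-w x y) *
        Ex (qm m) n (fun l => φ l * Real.exp (-(addF w l - addF w (y :: x :: t)))) (y :: x :: t) := by
      rw [← Ex_smul]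
      congr 1
      funext l
      rw [mul_left_comm, ← Real.exp_add]
      congr 2
      simp only [addF]
      ring
    rw [e1, ← mul_assoc]
    have e2 : stp (qm m) (x :: t) y * Real.exp (-w x y) = stp (phat G δ) (x :: t) y := by
      simp only [stp, hxt]
      rw [hw x y h, ← Real.log_inv, Real.exp_log (by positivity), qm]
      field_simp
    rw [e2]
    exact mul_le_mul_of_nonneg_left (ih y (x :: t) hpe) (phat_nonneg G hδ _ _ _)

theorem head_verts {F : Finset (Sym2 V)} (hF : F.Nonempty) (l : List V) (hl : pathEdges l = F) :
    ∃ x t, l = x :: t ∧ memVerts F x := by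
  match l with
  | [] => simp [pathEdges] at hl; simp [← hl] at hF
  | [_] => simp [pathEdges] at hl; simp [← hl] at hF
  | x :: y :: t =>
    refine ⟨x, y :: t, rfl, (memVerts_iff F x).2 ⟨y, ?_⟩⟩
    rw [← hl, pathEdges]; simp

theorem Phase.main (G : SimpleGraph V) [DecidableRel G.Adj] {δ : ℝ} (hδ : 0 < δ)
    {F : Finset (Sym2 V)} {m : V → V → ℝ} (P : Phase F m) (hF : F ⊆ G.edgeFinset)
    {ε : ℝ} (hε : 0 < ε) :
    ∀ᶠ n : ℕ in atTop, ∀ l, pathEdges l = F →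
      1 / 2 * Real.exp (-(n * (phiF (phat G δ F) m / (∑ x, ∑ y, m x y) + ε))) ≤
      Ex (phat G δ) n (fun l' => if pathEdges l' = F ∧ ∀ a, |(l'.count a : ℝ) - l.count a -
        n * ((∑ y, m a y) / (∑ x, ∑ y, m x y))| ≤ ε * n then 1 else 0) l := by
  set R := ∑ x, ∑ y, m x y with hR
  set w : V → V → ℝ := fun x y => Real.log (m x y / (∑ z, m x z) / phat G δ F x y) with hw
  set ga : V → V → V → ℝ := fun a _ y => if y = a then 1 else 0 with hga
  have hcw : ∑ x, ∑ y, m x y * w x y = phiF (phat G δ F) m := by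
    unfold phiF
    refine Finset.sum_congr rfl fun x _ => Finset.sum_congr rfl fun y _ => ?_
    by_cases h : s(x, y) ∈ F
    · have hadj := hF h
      rw [SimpleGraph.mem_edgeFinset, SimpleGraph.mem_edgeSet] at hadj
      have hp := phat_pos G hδ F hadj
      have hm := P.pos x y h
      have hrow := P.row_pos ((memVerts_iff F x).2 ⟨y, h⟩)
      simp only [hw]
      rw [Real.log_div (by positivity) hp.ne', Real.log_div hm.ne' hrow.ne']
    · simp [P.zero x y h]
  have hca : ∀ a, ∑ x, ∑ y, m x y * ga a x y = ∑ y, m a y := by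
    intro a
    rw [P.bal a]
    refine Finset.sum_congr rfl fun x _ => ?_
    simp [hga]
  set η : ℝ := 1 / (2 * (Fintype.card V + 1)) with hη
  have hη0 : 0 < η := by positivity
  have hall := (eventually_all (l := atTop) (ι := V)).2 fun a => P.lln (ga a) hε hη0
  filter_upwards [P.lln w hε hη0, hall] with n h1 h2 l hl
  obtain ⟨x, t, rfl, hx⟩ := head_verts P.ne l hl
  have h1 := h1 x t hx
  have h2 := fun a => h2 a x t hx
  rw [hcw, ← hR] at h1
  simp only [hca, ← hR] at h2
  set φ : List V → ℝ := fun l' => if ∀ a, |(l'.count a : ℝ) - (x :: t).count a -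
        n * ((∑ y, m a y) / R)| ≤ ε * n then 1 else 0 with hφ
  have hφ0 : ∀ l, 0 ≤ φ l := fun l => by simp only [hφ]; split_ifs <;> simp
  have hcomp := P.compare G hδ hF φ hφ0 w (fun x y _ => rfl) n x t hl
  have e1 : (fun l' => φ l' * if pathEdges l' = F then (1 : ℝ) else 0) =
      (fun l' => if pathEdges l' = F ∧ ∀ a, |(l'.count a : ℝ) - (x :: t).count a -
        n * ((∑ y, m a y) / R)| ≤ ε * n then 1 else 0) := by
    funext l'
    simp only [hφ]
    by_cases hA : pathEdges l' = F <;> simp [hA]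
  rw [e1] at hcomp
  refine le_trans ?_ hcomp
  set E0 := Real.exp (-(n * (phiF (phat G δ F) m / R + ε))) with hE0
  set bw : List V → ℝ := fun l' => if |addF w l' - addF w (x :: t) -
        n * (phiF (phat G δ F) m / R)| ≤ ε * n then 0 else 1 with hbw
  have hgood : (1 : ℝ) / 2 ≤ Ex (qm m) n (fun l' => φ l' * (1 - bw l')) (x :: t) := by
    have h3 : (1 : ℝ) ≤ Ex (qm m) n (fun l' => φ l' * (1 - bw l') + (bw l' +
        ∑ a, if |addF (ga a) l' - addF (ga a) (x :: t) -
        n * ((∑ y, m a y) / R)| ≤ ε * n then 0 else 1)) (x :: t) := by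
      refine (P.Ex_one n x t hx).symm.trans_le ?_
      refine Ex_mono _ P.q_nonneg n _ fun u hu => ?_
      have hnn : ∀ a, (0 : ℝ) ≤ if |addF (ga a) (u ++ x :: t) - addF (ga a) (x :: t) -
        n * ((∑ y, m a y) / R)| ≤ ε * n then 0 else 1 := fun a => by split_ifs <;> simp
      have hb01 : bw (u ++ x :: t) = 0 ∨ bw (u ++ x :: t) = 1 := by
        simp only [hbw]; split_ifs <;> simp
      have hsn := Finset.sum_nonneg fun a (_ : a ∈ Finset.univ) => hnn a
      by_cases hev : ∀ a, |((u ++ x :: t).count a : ℝ) - (x :: t).count a -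
        n * ((∑ y, m a y) / R)| ≤ ε * n
      · have : φ (u ++ x :: t) = 1 := by simp only [hφ]; rw [if_pos hev]
        rw [this]
        linarith
      · push Not at hev
        obtain ⟨a, ha⟩ := hev
        rw [count_addF] at ha
        have h4 := Finset.single_le_sum (f := fun a => if |addF (ga a) (u ++ x :: t) -
          addF (ga a) (x :: t) - n * ((∑ y, m a y) / R)| ≤ ε * n then (0 : ℝ) else 1)
          (fun a _ => hnn a) (Finset.mem_univ a)
        beta_reduce at h4
        rw [if_neg (not_le.2 ha)] at h4
        have h5 : 0 ≤ φ (u ++ x :: t) * (1 - bw (u ++ x :: t)) :=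
          mul_nonneg (hφ0 _) (by rcases hb01 with h | h <;> rw [h] <;> norm_num)
        have h6 : 0 ≤ bw (u ++ x :: t) := by rcases hb01 with h | h <;> rw [h] <;> norm_num
        linarith
    rw [Ex_add, Ex_add, Ex_sum] at h3
    have h4 : ∑ a, Ex (qm m) n (fun l' => if |addF (ga a) l' - addF (ga a) (x :: t) -
        n * ((∑ y, m a y) / R)| ≤ ε * n then 0 else 1) (x :: t) ≤ ∑ _a : V, η :=
      Finset.sum_le_sum fun a _ => h2 a
    rw [Finset.sum_const, nsmul_eq_mul, Finset.card_univ] at h4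
    have h5 : η + Fintype.card V * η = 1 / 2 := by rw [hη]; field_simp; ring
    linarith
  calc 1 / 2 * E0 ≤ Ex (qm m) n (fun l' => φ l' * (1 - bw l')) (x :: t) * E0 :=
        mul_le_mul_of_nonneg_right hgood (Real.exp_pos _).le
    _ = Ex (qm m) n (fun l' => E0 * (φ l' * (1 - bw l'))) (x :: t) := by
        rw [Ex_smul, mul_comm]
    _ ≤ _ := by
        refine Ex_mono _ P.q_nonneg n _ fun u hu => ?_
        rw [mul_left_comm]
        refine mul_le_mul_of_nonneg_left ?_ (hφ0 _)
        simp only [hbw]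
        split_ifs with hif
        · rw [sub_zero, mul_one, hE0]
          refine Real.exp_le_exp.2 (neg_le_neg ?_)
          have := (abs_le.1 hif).2
          linarith
        · rw [sub_self, mul_zero]
          exact (Real.exp_pos _).le

end Phase

section Lower

variable {V : Type} [Fintype V] [DecidableEq V]

theorem Phase.scaled (G : SimpleGraph V) [DecidableRel G.Adj] {δ : ℝ} (hδ : 0 < δ)
    {F : Finset (Sym2 V)} {m : V → V → ℝ} (P : Phase F m) (hF : F ⊆ G.edgeFinset)
    {ε : ℝ} (hε : 0 < ε) (K : ℝ) :
    ∀ᶠ n : ℕ in atTop, ∀ l, pathEdges l = F → ∀ H : ℕ, |(H : ℝ) - n * ∑ x, ∑ y, m x y| ≤ K →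
      Real.exp (-(n * (phiF (phat G δ F) m + ε))) ≤
      Ex (phat G δ) H (fun l' => if pathEdges l' = F ∧ ∀ a, |(l'.count a : ℝ) - l.count a -
        n * (∑ y, m a y)| ≤ ε * n then 1 else 0) l := by
  by_cases hK : K < 0
  · exact Eventually.of_forall fun n l _ H h => absurd h (not_le.2 (hK.trans_le (abs_nonneg _)))
  rw [not_lt] at hK
  set R := ∑ x, ∑ y, m x y with hR
  have hR0 : 0 < R := P.tot_pos
  set ε' := ε / (2 * (R + 1)) with hε'
  have hε'0 : 0 < ε' := by positivity
  have hεR : ε' * R ≤ ε / 2 := by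
    rw [hε', div_mul_eq_mul_div, div_le_div_iff₀ (by positivity) (by positivity)]
    nlinarith
  set Φ := phiF (phat G δ F) m with hΦ
  obtain ⟨n0, hn0⟩ := eventually_atTop.1 (P.main G hδ hF hε'0)
  rw [← hR] at hn0
  filter_upwards [ev_ge hR0 (n0 + K), ev_ge (half_pos hε) (ε' * K + K),
    ev_ge (half_pos hε) (Real.log 2 + K * |Φ / R| + ε' * K)] with n h1 h2 h3 l hl H hH
  have hH' := abs_le.1 hH
  have hHn0 : n0 ≤ H := by
    have : (n0 : ℝ) ≤ H := by nlinarith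
    exact_mod_cast this
  have hmain := hn0 H hHn0 l hl
  have hnn : (0 : ℝ) ≤ n := Nat.cast_nonneg n
  have hεH : ε' * H ≤ ε / 2 * n + ε' * K := by
    have : ε' * H ≤ ε' * (n * R + K) := mul_le_mul_of_nonneg_left (by linarith) hε'0.le
    nlinarith
  refine le_trans ?_ (hmain.trans (Ex_mono _ (phat_nonneg G hδ) _ _ fun u hu => ?_))
  · rw [show (1 : ℝ) / 2 = Real.exp (-Real.log 2) by
      rw [Real.exp_neg, Real.exp_log (by norm_num)]; norm_num, ← Real.exp_add]
    refine Real.exp_le_exp.2 ?_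
    have e1 : (n : ℝ) * Φ = n * R * (Φ / R) := by field_simp
    have e2 : ((H : ℝ) - n * R) * (Φ / R) ≤ K * |Φ / R| := by
      refine (le_abs_self _).trans ?_
      rw [abs_mul]
      exact mul_le_mul_of_nonneg_right hH (abs_nonneg _)
    nlinarith
  · by_cases hev : pathEdges (u ++ l) = F ∧ ∀ a, |((u ++ l).count a : ℝ) - l.count a -
        H * ((∑ y, m a y) / R)| ≤ ε' * H
    swap
    · rw [if_neg hev]; split_ifs <;> simp
    rw [if_pos hev, if_pos]
    refine ⟨hev.1, fun a => ?_⟩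
    have h4 := hev.2 a
    have h5 : (∑ y, m a y) ≤ R := Finset.single_le_sum (f := fun a => ∑ y, m a y)
      (fun z _ => P.row_nonneg z) (Finset.mem_univ a)
    have h6 : |(H : ℝ) * ((∑ y, m a y) / R) - n * ∑ y, m a y| ≤ K := by
      have : (H : ℝ) * ((∑ y, m a y) / R) - n * ∑ y, m a y = (H - n * R) * ((∑ y, m a y) / R) := by
        field_simp
      rw [this, abs_mul, abs_of_nonneg (div_nonneg (P.row_nonneg a) hR0.le)]
      refine (mul_le_of_le_one_right (abs_nonneg _) ((div_le_one hR0).2 h5)).trans hH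
    have h7 := abs_add_le (((u ++ l).count a : ℝ) - l.count a - H * ((∑ y, m a y) / R))
      ((H : ℝ) * ((∑ y, m a y) / R) - n * ∑ y, m a y)
    have h8 : ((u ++ l).count a : ℝ) - l.count a - H * ((∑ y, m a y) / R) +
      ((H : ℝ) * ((∑ y, m a y) / R) - n * ∑ y, m a y) =
      ((u ++ l).count a : ℝ) - l.count a - n * ∑ y, m a y := by ring
    rw [h8] at h7
    linarith

theorem exists_kappa (G : SimpleGraph V) [DecidableRel G.Adj] {δ : ℝ} (hδ : 0 < δ) (v₁ : V) :
    ∃ κ : ℝ, 0 < κ ∧ κ ≤ 1 ∧ ∀ F x y, G.Adj x y → κ ≤ phat G δ F x y := by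
  have : Nonempty V := ⟨v₁⟩
  let f : Finset (Sym2 V) × V × V → ℝ := fun i => if G.Adj i.2.1 i.2.2 then phat G δ i.1 i.2.1 i.2.2 else 1
  obtain ⟨i, hi⟩ := Finite.exists_min f
  refine ⟨min (f i) 1, lt_min ?_ one_pos, min_le_right _ _, fun F x y h => ?_⟩
  · simp only [f]
    split_ifs with h
    · exact phat_pos G hδ _ h
    · exact one_pos
  · refine (min_le_left _ _).trans ((hi (F, x, y)).trans ?_)
    simp [f, h]

def RR (G : SimpleGraph V) [DecidableRel G.Adj] (δ κ : ℝ) (l l' : List V) (n : ℕ) : Prop :=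
  (∃ u : List V, u.length = n ∧ l' = u ++ l) ∧
    ∀ φ : List V → ℝ, (∀ l, 0 ≤ φ l) → κ ^ n * φ l' ≤ Ex (phat G δ) n φ l

theorem RR.refl (G : SimpleGraph V) [DecidableRel G.Adj] (δ κ : ℝ) (l : List V) :
    RR G δ κ l l 0 := ⟨⟨[], rfl, rfl⟩, fun φ _ => by simp [Ex]⟩

theorem RR.trans {G : SimpleGraph V} [DecidableRel G.Adj] {δ κ : ℝ} (hδ : 0 < δ) (hκ : 0 < κ)
    {l l' l'' : List V} {n n' : ℕ} (h : RR G δ κ l l' n) (h' : RR G δ κ l' l'' n') :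
    RR G δ κ l l'' (n + n') := by
  obtain ⟨⟨u, hu, rfl⟩, h1⟩ := h
  obtain ⟨⟨u', hu', rfl⟩, h2⟩ := h'
  refine ⟨⟨u' ++ u, by simp [hu, hu', add_comm], by simp⟩, fun φ hφ => ?_⟩
  rw [Ex_comp, pow_add, mul_assoc]
  refine le_trans ?_ (h1 _ fun l => Ex_nonneg _ (phat_nonneg G hδ) n' l hφ)
  exact mul_le_mul_of_nonneg_left (h2 φ hφ) (pow_pos hκ n).le

theorem RR.single {G : SimpleGraph V} [DecidableRel G.Adj] {δ κ : ℝ} (hδ : 0 < δ)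
    (hκ : ∀ F x y, G.Adj x y → κ ≤ phat G δ F x y) (x y : V) (t : List V) (h : G.Adj x y) :
    RR G δ κ (x :: t) (y :: x :: t) 1 := by
  refine ⟨⟨[y], rfl, rfl⟩, fun φ hφ => ?_⟩
  rw [pow_one]
  refine (mul_le_mul_of_nonneg_right (hκ (pathEdges (x :: t)) x y h) (hφ _)).trans ?_
  simp only [Ex, stp]
  exact Finset.single_le_sum (f := fun z => phat G δ (pathEdges (x :: t)) x z * φ (z :: x :: t))
    (fun z _ => mul_nonneg (phat_nonneg G hδ _ _ _) (hφ _)) (Finset.mem_univ y)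

def Link (F : Finset (Sym2 V)) : V → V → Prop := Relation.ReflTransGen fun a b => s(a, b) ∈ F

theorem Link.symm {F : Finset (Sym2 V)} {x y : V} (h : Link F x y) : Link F y x := by
  induction h with
  | refl => exact Relation.ReflTransGen.refl
  | tail _ hbc ih => exact Relation.ReflTransGen.head (by rw [Sym2.eq_swap]; exact hbc) ih

theorem Link.path {G : SimpleGraph V} [DecidableRel G.Adj] {δ κ : ℝ} (hδ : 0 < δ) (hκ0 : 0 < κ)
    (hκ : ∀ F x y, G.Adj x y → κ ≤ phat G δ F x y) {F : Finset (Sym2 V)} (hF : F ⊆ G.edgeFinset)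
    {x z : V} (h : Link F x z) :
    ∃ n, ∀ t, pathEdges (x :: t) = F → ∃ t', pathEdges (z :: t') = F ∧ RR G δ κ (x :: t) (z :: t') n := by
  induction h with
  | refl => exact ⟨0, fun t ht => ⟨t, ht, RR.refl G δ κ _⟩⟩
  | @tail b c hb hbc ih =>
    obtain ⟨n, hn⟩ := ih
    refine ⟨n + 1, fun t ht => ?_⟩
    obtain ⟨t', ht', hr⟩ := hn t ht
    have hadj := hF hbc
    rw [SimpleGraph.mem_edgeFinset, SimpleGraph.mem_edgeSet] at hadj
    refine ⟨b :: t', ?_, hr.trans hδ hκ0 (RR.single hδ hκ b c t' hadj)⟩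
    rw [pathEdges, ht', Finset.insert_eq_self, Sym2.eq_swap]
    exact hbc

def ConnTo (G : SimpleGraph V) [DecidableRel G.Adj] (δ κ : ℝ) (F F' : Finset (Sym2 V)) : Prop :=
  ∃ D : ℕ, ∀ l, pathEdges l = F → ∃ n ≤ D, ∃ l', pathEdges l' = F' ∧ RR G δ κ l l' n

theorem connTo {G : SimpleGraph V} [DecidableRel G.Adj] {δ κ : ℝ} (hδ : 0 < δ) (hκ0 : 0 < κ)
    (hκ : ∀ F x y, G.Adj x y → κ ≤ phat G δ F x y) {F : Finset (Sym2 V)} (hF : F ⊆ G.edgeFinset)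
    (hne : F.Nonempty) {a b : V} (hab : G.Adj a b) (hlink : ∀ x, memVerts F x → Link F x a) :
    ConnTo G δ κ F (insert s(a, b) F) := by
  choose! n hn using fun x hx => Link.path (G := G) hδ hκ0 hκ hF (hlink x hx)
  refine ⟨∑ x, n x + 1, fun l hl => ?_⟩
  obtain ⟨x, t, rfl, hx⟩ := head_verts hne l hl
  obtain ⟨t', ht', hr⟩ := hn x hx t hl
  refine ⟨n x + 1, ?_, b :: a :: t', ?_, hr.trans hδ hκ0 (RR.single hδ hκ a b t' hab)⟩
  · have : n x ≤ ∑ x, n x := Finset.single_le_sum (fun _ _ => Nat.zero_le _) (Finset.mem_univ x)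
    omega
  · rw [pathEdges, ht', Sym2.eq_swap]

theorem seq_step {G : SimpleGraph V} [DecidableRel G.Adj] {v₁ : V}
    {Es : Fin G.edgeFinset.card → Finset (Sym2 V)} (hE : Es ∈ seqE G v₁)
    {k l : Fin G.edgeFinset.card} (hkl : (k : ℕ) + 1 = l) :
    ∃ a b, memVerts (Es k) a ∧ G.Adj a b ∧ Es l = insert s(a, b) (Es k) := by
  obtain ⟨e, he, hins⟩ := Finset.exists_eq_insert_iff.2
    ⟨(hE.2.2.1 k l hkl).subset, by rw [hE.2.1, hE.2.1, hkl]⟩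
  obtain ⟨e', he', v, hv, hv'⟩ := hE.2.2.2.2 k l hkl e (by rw [← hins]; simp [he])
  obtain ⟨b, rfl⟩ := hv
  refine ⟨v, b, ⟨e', he', hv'⟩, ?_, hins.symm⟩
  have := hE.1 l (hins ▸ Finset.mem_insert_self _ _)
  simpa using this

theorem seq_link {G : SimpleGraph V} [DecidableRel G.Adj] {v₁ : V}
    {Es : Fin G.edgeFinset.card → Finset (Sym2 V)} (hE : Es ∈ seqE G v₁) (i : ℕ) :
    ∀ hi : i < G.edgeFinset.card, ∀ x, memVerts (Es ⟨i, hi⟩) x → Link (Es ⟨i, hi⟩) v₁ x := by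
  induction i with
  | zero =>
    intro hi x hx
    obtain ⟨e, he, hv⟩ := hE.2.2.2.1 ⟨0, hi⟩ rfl
    have hc := hE.2.1 ⟨0, hi⟩
    simp only [zero_add] at hc
    obtain ⟨e', he'⟩ := Finset.card_eq_one.1 hc
    rw [he', Finset.mem_singleton] at he
    subst he
    obtain ⟨b, rfl⟩ := hv
    rw [he'] at hx ⊢
    obtain ⟨f, hf, hxf⟩ := hx
    rw [Finset.mem_singleton] at hf
    subst hf
    rcases Sym2.mem_iff.1 hxf with rfl | rfl
    · exact Relation.ReflTransGen.refl
    · exact Relation.ReflTransGen.single (by simp)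
  | succ i ih =>
    intro hi x hx
    obtain ⟨a, b, ha, hab, hins⟩ := seq_step hE (k := ⟨i, by omega⟩) (l := ⟨i + 1, hi⟩) rfl
    have hmono : ∀ z, Link (Es ⟨i, by omega⟩) v₁ z → Link (Es ⟨i + 1, hi⟩) v₁ z := by
      intro z hz
      induction hz with
      | refl => exact Relation.ReflTransGen.refl
      | tail _ hbc ih2 =>
        exact Relation.ReflTransGen.tail ih2 (by rw [hins]; exact Finset.mem_insert_of_mem hbc)
    have hva := hmono a (ih _ a ha)
    obtain ⟨f, hf, hxf⟩ := hx
    rw [hins, Finset.mem_insert] at hf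
    rcases hf with rfl | hf
    · rcases Sym2.mem_iff.1 hxf with rfl | rfl
      · exact hva
      · exact Relation.ReflTransGen.tail hva (by rw [hins]; simp)
    · exact hmono x (ih _ x ⟨f, hf, hxf⟩)

theorem link_const {F : Finset (Sym2 V)} (h : V → ℝ) (hh : ∀ x y, s(x, y) ∈ F → h x = h y) {x y : V}
    (hl : Link F x y) : h x = h y := by
  induction hl with
  | refl => rfl
  | tail _ hbc ih => rw [ih, hh _ _ hbc]

def TP (G : SimpleGraph V) [DecidableRel G.Adj] (δ : ℝ) (F : Finset (Sym2 V)) (mass : ℝ)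
    (marg : V → ℝ) (cost : ℝ) : Prop :=
  ∀ ε : ℝ, 0 < ε → ∀ K : ℝ, ∀ᶠ n : ℕ in atTop, ∀ l, pathEdges l = F → ∀ H : ℕ,
    |(H : ℝ) - n * mass| ≤ K → Real.exp (-(n * (cost + ε))) ≤
      Ex (phat G δ) H (fun l' => if ∀ a, |(l'.count a : ℝ) - l.count a - n * marg a| ≤ ε * n
        then 1 else 0) l

theorem TP.base (G : SimpleGraph V) [DecidableRel G.Adj] {δ : ℝ} (hδ : 0 < δ)
    {F : Finset (Sym2 V)} {m : V → V → ℝ} (P : Phase F m) (hF : F ⊆ G.edgeFinset) :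
    TP G δ F (∑ x, ∑ y, m x y) (fun a => ∑ y, m a y) (phiF (phat G δ F) m) := by
  intro ε hε K
  filter_upwards [P.scaled G hδ hF hε K] with n hn l hl H hH
  refine (hn l hl H hH).trans (Ex_mono _ (phat_nonneg G hδ) _ _ fun u hu => ?_)
  by_cases h : ∀ a, |((u ++ l).count a : ℝ) - l.count a - n * ∑ y, m a y| ≤ ε * n
  · rw [if_pos h]; split_ifs <;> simp
  · rw [if_neg h, if_neg (fun h' => h h'.2)]

theorem TP.step (G : SimpleGraph V) [DecidableRel G.Adj] {δ κ : ℝ} (hδ : 0 < δ) (hκ0 : 0 < κ)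
    (hκ1 : κ ≤ 1) {F F' : Finset (Sym2 V)} {m : V → V → ℝ} (P : Phase F m) (hF : F ⊆ G.edgeFinset)
    (hconn : ConnTo G δ κ F F') {mass : ℝ} {marg : V → ℝ} {cost : ℝ} (hmass : 0 < mass)
    (T : TP G δ F' mass marg cost) :
    TP G δ F ((∑ x, ∑ y, m x y) + mass) (fun a => (∑ y, m a y) + marg a)
      (phiF (phat G δ F) m + cost) := by
  intro ε hε K
  obtain ⟨D, hD⟩ := hconn
  set R := ∑ x, ∑ y, m x y with hR
  have hR0 : 0 < R := P.tot_pos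
  set Φ := phiF (phat G δ F) m with hΦ
  have hε1 : 0 < ε / 4 := by positivity
  filter_upwards [P.scaled G hδ hF hε1 1, T (ε / 4) hε1 (K + 1 + D), ev_ge hmass (K + 1 + D),
    ev_ge (half_pos hε) D, ev_ge (half_pos hε) (-(D * Real.log κ))] with n h1 h2 h3 h4 h5 l hl H hH
  have hnn : (0 : ℝ) ≤ n := Nat.cast_nonneg n
  have hH' := abs_le.1 hH
  set H1 := ⌊(n : ℝ) * R⌋₊ with hH1
  have hf1 : (H1 : ℝ) ≤ n * R := Nat.floor_le (by positivity)
  have hf2 : (n : ℝ) * R < H1 + 1 := Nat.lt_floor_add_one _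
  have hHD : H1 + D ≤ H := by
    have : (H1 : ℝ) + D ≤ H := by nlinarith
    exact_mod_cast this
  obtain ⟨H2, rfl⟩ : ∃ H2, H = H1 + H2 := ⟨H - H1, by omega⟩
  rw [Ex_comp]
  have hp := h1 l hl H1 (by rw [abs_le]; constructor <;> linarith)
  set cc := κ ^ D * Real.exp (-(n * (cost + ε / 4))) with hcc
  have hcc0 : 0 < cc := by positivity
  set φ : List V → ℝ := fun l' => if ∀ a, |(l'.count a : ℝ) - l.count a -
    n * ((∑ y, m a y) + marg a)| ≤ ε * n then 1 else 0 with hφ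
  have hφ0 : ∀ l, 0 ≤ φ l := fun l => by simp only [hφ]; split_ifs <;> simp
  calc _ ≤ cc * Real.exp (-(n * (Φ + ε / 4))) := by
        have hk : κ ^ D = Real.exp (D * Real.log κ) := by
          rw [← Real.log_pow, Real.exp_log (pow_pos hκ0 _)]
        rw [hcc, hk, ← Real.exp_add, ← Real.exp_add]
        refine Real.exp_le_exp.2 ?_
        linarith
    _ ≤ cc * _ := mul_le_mul_of_nonneg_left hp hcc0.le
    _ = _ := (Ex_smul _ _ _ _ _).symm
    _ ≤ _ := by
        refine Ex_mono _ (phat_nonneg G hδ) _ _ fun u hu => ?_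
        split_ifs with hev
        swap
        · rw [mul_zero]; exact Ex_nonneg _ (phat_nonneg G hδ) _ _ hφ0
        rw [mul_one]
        obtain ⟨n', hn', l2, hl2, ⟨⟨u2, hu2, hl2'⟩, hr⟩⟩ := hD _ hev.1
        obtain ⟨H3, rfl⟩ : ∃ H3, H2 = n' + H3 := ⟨H2 - n', by omega⟩
        rw [Ex_comp]
        refine le_trans ?_ (hr _ fun l => Ex_nonneg _ (phat_nonneg G hδ) _ l hφ0)
        have hn'D : (n' : ℝ) ≤ D := by exact_mod_cast hn'
        have hn'0 : (0 : ℝ) ≤ n' := Nat.cast_nonneg _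
        have hq := h2 l2 hl2 H3 (by
          push_cast at hH'
          rw [abs_le]; constructor <;> linarith)
        rw [hcc]
        refine mul_le_mul (pow_le_pow_of_le_one hκ0.le hκ1 hn') ?_ (Real.exp_pos _).le
          (pow_pos hκ0 _).le
        refine hq.trans (Ex_mono _ (phat_nonneg G hδ) _ _ fun u3 hu3 => ?_)
        split_ifs with hev2
        swap
        · exact hφ0 _
        simp only [hφ]
        rw [if_pos]
        intro a
        have ha1 := hev.2 a
        have ha2 := hev2 a
        have ha3 : (l2.count a : ℝ) - (u ++ l).count a = u2.count a := by
          rw [hl2', List.count_append]; push_cast; ring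
        have ha4 : (u2.count a : ℝ) ≤ D := by
          have : u2.count a ≤ D := (List.count_le_length).trans (hu2.le.trans hn')
          exact_mod_cast this
        have ha5 : (0 : ℝ) ≤ u2.count a := Nat.cast_nonneg _
        rw [abs_le] at ha1 ha2 ⊢
        constructor <;> nlinarith

theorem TP.all (G : SimpleGraph V) [DecidableRel G.Adj] {δ κ : ℝ} (hδ : 0 < δ) (hκ0 : 0 < κ)
    (hκ1 : κ ≤ 1) (Es : Fin G.edgeFinset.card → Finset (Sym2 V))
    (M : Fin G.edgeFinset.card → V → V → ℝ) (P : ∀ k, Phase (Es k) (M k))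
    (hF : ∀ k, Es k ⊆ G.edgeFinset)
    (hconn : ∀ k l : Fin G.edgeFinset.card, (k : ℕ) + 1 = l → ConnTo G δ κ (Es k) (Es l)) (d : ℕ) :
    ∀ i (hi : i < G.edgeFinset.card), i + d + 1 = G.edgeFinset.card →
      TP G δ (Es ⟨i, hi⟩) (∑ k : Fin G.edgeFinset.card, if i ≤ (k : ℕ) then ∑ x, ∑ y, M k x y else 0)
        (fun a => ∑ k : Fin G.edgeFinset.card, if i ≤ (k : ℕ) then ∑ y, M k a y else 0)
        (∑ k : Fin G.edgeFinset.card, if i ≤ (k : ℕ) then phiF (phat G δ (Es k)) (M k) else 0) := by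
  induction d with
  | zero =>
    intro i hi hid
    have hs : ∀ f : Fin G.edgeFinset.card → ℝ, (∑ k : Fin G.edgeFinset.card, if i ≤ (k : ℕ) then f k else 0) = f ⟨i, hi⟩ := by
      intro f
      rw [Finset.sum_eq_single ⟨i, hi⟩]
      · simp
      · intro k _ hk
        rw [if_neg]
        intro h
        exact hk (Fin.ext (by have := k.2; simp only; omega))
      · simp
    simp only [hs]
    exact TP.base G hδ (P _) (hF _)
  | succ d ih =>
    intro i hi hid
    have hs : ∀ f : Fin G.edgeFinset.card → ℝ, (∑ k : Fin G.edgeFinset.card, if i ≤ (k : ℕ) then f k else 0) =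
        f ⟨i, hi⟩ + ∑ k : Fin G.edgeFinset.card, if i + 1 ≤ (k : ℕ) then f k else 0 := by
      intro f
      have : f ⟨i, hi⟩ = ∑ k : Fin G.edgeFinset.card, if k = ⟨i, hi⟩ then f k else 0 := by simp
      rw [this, ← Finset.sum_add_distrib]
      refine Finset.sum_congr rfl fun k _ => ?_
      by_cases hk : k = ⟨i, hi⟩
      · subst hk; simp
      · have hk' : (k : ℕ) ≠ i := fun h => hk (Fin.ext h)
        have hiff : i ≤ (k : ℕ) ↔ i + 1 ≤ (k : ℕ) := by omega
        simp only [hk, if_false, zero_add, hiff]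
    simp only [hs]
    refine TP.step G hδ hκ0 hκ1 (P _) (hF _) (hconn ⟨i, hi⟩ ⟨i + 1, by omega⟩ rfl) ?_
      (ih (i + 1) (by omega) (by omega))
    refine Finset.sum_pos' (fun k _ => ?_) ⟨⟨i + 1, by omega⟩, Finset.mem_univ _, ?_⟩
    · split_ifs
      · exact (P k).tot_pos.le
      · exact le_rfl
    · simp only [le_refl, if_true]; exact (P _).tot_pos

theorem sum_count (l : List V) : ∑ a, (l.count a : ℝ) = l.length := by
  induction l with
  | nil => simp
  | cons x l ih =>
    simp only [List.count_cons, List.length_cons]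
    push_cast
    rw [Finset.sum_add_distrib, ih]
    congr 1
    simp

theorem lower_core (G : SimpleGraph V) [DecidableRel G.Adj] (hG : G.Connected)
    (hV : 3 ≤ Fintype.card V) (v₁ : V) {δ : ℝ} (hδ : 0 < δ) 
    {Es : Fin G.edgeFinset.card → Finset (Sym2 V)} (hE : Es ∈ seqE G v₁)
    {M : Fin G.edgeFinset.card → V → V → ℝ} (hM : M ∈ KK G Es)
    (hpos : ∀ k x y, s(x, y) ∈ Es k → 0 < M k x y) (O : Set (ProbMeas V)) {r : ℝ} (hr : 0 < r)
    (hO : ∀ ν : ProbMeas V, (∀ a, |ν.1 a - ∑ k, ∑ y, M k a y| ≤ r) → ν ∈ O) {β : ℝ}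
    (hβ : PhiK G δ Es M < β) :
    ∀ᶠ n : ℕ in atTop, ((-β : ℝ) : EReal) ≤
      ((((n : ℝ) + 1)⁻¹ : ℝ) : EReal) * elog (probEmp G δ v₁ n O) := by
  obtain ⟨κ, hκ0, hκ1, hκ⟩ := exists_kappa G hδ v₁
  have hb := edge_card_pos G hG hV v₁
  have hP : ∀ k, Phase (Es k) (M k) := by
    intro k
    refine ⟨seqE_ne hE k, hpos k, hM.2.1 k, hM.2.2.1 k, fun h hh x y hx hy => ?_⟩
    have h1 := link_const h hh (seq_link hE k k.2 x hx)
    have h2 := link_const h hh (seq_link hE k k.2 y hy)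
    rw [← h1, ← h2]
  have hconn : ∀ k l : Fin G.edgeFinset.card, (k : ℕ) + 1 = l → ConnTo G δ κ (Es k) (Es l) := by
    intro k l hkl
    obtain ⟨a, b, ha, hab, hins⟩ := seq_step hE hkl
    rw [hins]
    exact connTo hδ hκ0 hκ (hE.1 k) (seqE_ne hE k) hab fun x hx =>
      (seq_link hE k k.2 x hx).symm.trans (seq_link hE k k.2 a ha)
  have hT := TP.all G hδ hκ0 hκ1 Es M hP hE.1 hconn (G.edgeFinset.card - 1) 0 hb (by omega)
  simp only [Nat.zero_le, if_true] at hT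
  rw [hM.2.2.2] at hT
  set Φ := PhiK G δ Es M with hΦ
  have hΦ' : ∑ k, phiF (phat G δ (Es k)) (M k) = Φ := rfl
  rw [hΦ'] at hT
  set ε := min ((β - Φ) / 2) (r / 2) with hε
  have hε0 : 0 < ε := lt_min (by linarith) (by linarith)
  have hε1 : ε ≤ (β - Φ) / 2 := min_le_left _ _
  have hε2 : ε ≤ r / 2 := min_le_right _ _
  obtain ⟨e, he, hv⟩ := hE.2.2.2.1 ⟨0, hb⟩ rfl
  have hc := hE.2.1 ⟨0, hb⟩
  simp only [zero_add] at hc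
  obtain ⟨e', he'⟩ := Finset.card_eq_one.1 hc
  rw [he', Finset.mem_singleton] at he
  subst he
  obtain ⟨w, rfl⟩ := hv
  have hadj : G.Adj v₁ w := by
    have := hE.1 ⟨0, hb⟩ (he' ▸ Finset.mem_singleton_self _)
    simpa using this
  have hpe : pathEdges [w, v₁] = Es ⟨0, hb⟩ := by
    rw [he']; simp [pathEdges, Sym2.eq_swap]
  have hmarg : ∀ a, 0 ≤ ∑ k, ∑ y, M k a y ∧ ∑ k, ∑ y, M k a y ≤ 1 := by
    obtain ⟨ν, hν⟩ := KK_marg hM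
    intro a
    rw [hν]
    refine ⟨ν.2.1 a, ?_⟩
    refine le_of_le_of_eq ?_ ν.2.2
    exact Finset.single_le_sum (f := ν.1) (fun z _ => ν.2.1 z) (Finset.mem_univ a)
  filter_upwards [hT ε hε0 1, ev_ge (half_pos hr) 3, 
    ev_ge (show 0 < (β - Φ) / 2 by linarith) (-Real.log κ - β), eventually_gt_atTop 0]
    with n h1 h2 h3 hn0
  have hnp : (0 : ℝ) < (n : ℝ) + 1 := by positivity
  refine le_elog hnp ?_
  obtain ⟨H, rfl⟩ : ∃ H, n = 1 + H := ⟨n - 1, by omega⟩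
  have hnn : (0 : ℝ) ≤ H := Nat.cast_nonneg H
  have h4 := h1 [w, v₁] hpe H (by push_cast; rw [abs_le]; constructor <;> linarith)
  rw [probEmp_eq, Ex_comp]
  set φ : List V → ℝ := (fun l => if ∃ ν ∈ O, ∀ a, ν.1 a = (l.count a : ℝ) / (((1 + H : ℕ) : ℝ) + 1)
    then 1 else 0) with hφ
  have hφ0 : ∀ l, 0 ≤ φ l := fun l => by simp only [hφ]; split_ifs <;> simp
  refine le_trans ?_ ((RR.single hδ hκ v₁ w [] hadj).2 _ 
    fun l => Ex_nonneg _ (phat_nonneg G hδ) _ l hφ0)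
  rw [pow_one]
  calc _ ≤ κ * Real.exp (-(((1 + H : ℕ) : ℝ) * (Φ + ε))) := by
        rw [← Real.exp_log hκ0, ← Real.exp_add]
        refine Real.exp_le_exp.2 ?_
        have : (((1 + H : ℕ) : ℝ)) * ε ≤ ((1 + H : ℕ) : ℝ) * ((β - Φ) / 2) :=
          mul_le_mul_of_nonneg_left hε1 (Nat.cast_nonneg _)
        nlinarith
    _ ≤ κ * _ := mul_le_mul_of_nonneg_left h4 hκ0.le
    _ ≤ _ := by
        refine mul_le_mul_of_nonneg_left (Ex_mono _ (phat_nonneg G hδ) _ _ fun u hu => ?_) hκ0.le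
        split_ifs with hev
        swap
        · exact hφ0 _
        simp only [hφ]
        rw [if_pos]
        have hlen : (u ++ [w, v₁]).length = (1 + H) + 1 := by simp [hu]; omega
        refine ⟨⟨fun a => ((u ++ [w, v₁]).count a : ℝ) / (((1 + H : ℕ) : ℝ) + 1), fun a => by positivity,
          ?_⟩, ?_, fun a => rfl⟩
        · rw [← Finset.sum_div, sum_count, hlen]
          push_cast
          exact div_self (by positivity)
        · refine hO _ fun a => ?_
          simp only
          have ha1 := hev a
          have ha2 : (([w, v₁] : List V).count a : ℝ) ≤ 2 := by
            have : ([w, v₁] : List V).count a ≤ 2 := List.count_le_length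
            exact_mod_cast this
          have ha3 : (0 : ℝ) ≤ ([w, v₁] : List V).count a := Nat.cast_nonneg _
          have ha4 := hmarg a
          set mu := ∑ k, ∑ y, M k a y with hmu
          set N : ℝ := ((1 + H : ℕ) : ℝ) with hN
          have hN0 : 0 ≤ N := Nat.cast_nonneg _
          have hNe : ε * N ≤ r / 2 * N := mul_le_mul_of_nonneg_right hε2 hN0
          rw [show ((u ++ [w, v₁]).count a : ℝ) / (N + 1) - mu =
            (((u ++ [w, v₁]).count a : ℝ) - (N + 1) * mu) / (N + 1) by field_simp, abs_div,
            abs_of_pos hnp, div_le_iff₀ hnp, abs_le]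
          rw [abs_le] at ha1
          constructor <;> nlinarith

theorem lower_bound (G : SimpleGraph V) [DecidableRel G.Adj] (hG : G.Connected)
    (hV : 3 ≤ Fintype.card V) (v₁ : V) {δ : ℝ} (hδ : 0 < δ) (O : Set (ProbMeas V)) (hO : IsOpen O) :
      -sInf (Ifun G v₁ δ '' O) ≤
        Filter.liminf
          (fun n : ℕ => ((((n : ℝ) + 1)⁻¹ : ℝ) : EReal) * elog (probEmp G δ v₁ n O)) atTop := by
  rw [EReal.neg_le]
  refine EReal.le_of_forall_lt_iff_le.1 fun β hβ => ?_
  rw [EReal.neg_le]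
  obtain ⟨_, ⟨ν, hν, rfl⟩, hlt⟩ := sInf_lt_iff.1 hβ
  obtain ⟨Es, hE, M, hM, hmarg, hPhi⟩ := lemB G hδ ν β hlt
  rw [EReal.coe_lt_coe_iff] at hPhi
  obtain ⟨r, hr, hball⟩ := Metric.isOpen_iff.1 hO ν hν
  obtain ⟨huM, hupos⟩ := uM_mem G hG hV v₁ hE
  let Mt : ℝ → Fin G.edgeFinset.card → V → V → ℝ := fun t k x y =>
    (1 - t) * M k x y + t * uM G Es k x y
  have hMtc : Continuous Mt := by
    refine continuous_pi fun k => continuous_pi fun x => continuous_pi fun y => ?_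
    simp only [Mt]
    fun_prop
  have hMt0 : Mt 0 = M := by funext k x y; simp [Mt]
  have ev1 : ∀ᶠ t in 𝓝 (0 : ℝ), PhiK G δ Es (Mt t) < β := by
    refine ((PhiK_cont G δ Es).comp hMtc).continuousAt.eventually_lt continuousAt_const ?_
    simp only [Function.comp, hMt0]; exact hPhi
  have ev2 : ∀ᶠ t in 𝓝 (0 : ℝ), ∀ a, |(∑ k, ∑ y, Mt t k a y) - ν.1 a| < r / 2 := by
    rw [eventually_all]
    intro a
    have hcont : Continuous fun t => |(∑ k, ∑ y, Mt t k a y) - ν.1 a| := by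
      simp only [Mt]; fun_prop
    refine hcont.continuousAt.eventually_lt continuousAt_const ?_
    simp only [hMt0, hmarg, sub_self, abs_zero]
    positivity
  have ev3 : ∀ᶠ t in 𝓝[>] (0 : ℝ), t < 1 :=
    nhdsWithin_le_nhds (eventually_lt_nhds one_pos)
  obtain ⟨t, ⟨⟨ht1, ht2⟩, ht3⟩, ht4⟩ := ((((ev1.and ev2).filter_mono nhdsWithin_le_nhds).and ev3).and
    (self_mem_nhdsWithin : ∀ᶠ t in 𝓝[>] (0 : ℝ), t ∈ Set.Ioi 0)).exists
  have ht4' : 0 < t := ht4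
  have hMtK : Mt t ∈ KK G Es := by
    refine ⟨fun k x y => ?_, fun k x y h => ?_, fun k a => ?_, ?_⟩
    · exact add_nonneg (mul_nonneg (by linarith) (hM.1 k x y)) (mul_nonneg ht4'.le (huM.1 k x y))
    · simp only [Mt, hM.2.1 k x y h, huM.2.1 k x y h]; ring
    · simp only [Mt, Finset.sum_add_distrib, ← Finset.mul_sum, hM.2.2.1 k a, huM.2.2.1 k a]
    · simp only [Mt, Finset.sum_add_distrib, ← Finset.mul_sum, hM.2.2.2, huM.2.2.2]; ring
  have hfin := lower_core G hG hV v₁ hδ hE hMtK (fun k x y h => 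
    add_pos_of_nonneg_of_pos (mul_nonneg (by linarith) (hM.1 k x y)) (mul_pos ht4' (hupos k x y h)))
    O (r := r / 4) (by positivity) (fun ν' hν' => hball ?_) ht1
  · rw [EReal.coe_neg] at hfin
    exact le_liminf_of_le (by isBoundedDefault) hfin
  · rw [Metric.mem_ball, Subtype.dist_eq, dist_pi_lt_iff hr]
    intro a
    rw [Real.dist_eq]
    have h1 := hν' a
    have h2 := ht2 a
    rw [abs_le] at h1
    rw [abs_lt] at h2 ⊢
    constructor <;> linarith

end Lower

/-- The empirical measure process of the `δ`-ORRW satisfies a large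
deviation principle on `𝒫(V)` with good rate function `I_δ`. -/
theorem orrw_ldp {V : Type} [Fintype V] [DecidableEq V]
    (G : SimpleGraph V) [DecidableRel G.Adj] (hG : G.Connected)
    (hV : 3 ≤ Fintype.card V) (v₁ : V) (δ : ℝ) (hδ : 0 < δ) :
    LowerSemicontinuous (Ifun G v₁ δ) ∧
    (∀ M : ℝ, 0 < M → IsCompact {ν : ProbMeas V | Ifun G v₁ δ ν ≤ (M : EReal)}) ∧
    (∃ ν : ProbMeas V, Ifun G v₁ δ ν < ⊤) ∧
    (∀ C : Set (ProbMeas V), IsClosed C →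
      Filter.limsup
          (fun n : ℕ => ((((n : ℝ) + 1)⁻¹ : ℝ) : EReal) * elog (probEmp G δ v₁ n C)) atTop
        ≤ -sInf (Ifun G v₁ δ '' C)) ∧
    (∀ O : Set (ProbMeas V), IsOpen O →
      -sInf (Ifun G v₁ δ '' O) ≤
        Filter.liminf
          (fun n : ℕ => ((((n : ℝ) + 1)⁻¹ : ℝ) : EReal) * elog (probEmp G δ v₁ n O)) atTop) := by
  exact ⟨Ifun_lsc G v₁ hδ, fun M _ => Ifun_level G v₁ hδ _, Ifun_fin G hG hV v₁ hδ,
    fun C hC => upper_bound G hG hV v₁ hδ C hC, fun O hO => lower_bound G hG hV v₁ hδ O hO⟩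


end ORRW
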